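/- arXiv:2312.04925 — 2 statements merged into one kernel-verified Lean document; each statement's English description precedes it below -/
import Mathlib

section
/- For infinitely many positive integers n, there exists an n-vertex regular simple graph G whose (ordinary) adjacency matrix has minimum eigenvalue λ_min and maximum eigenvalue λ_max satisfying λ_min < λ_max and |λ_min/(λ_max − λ_min)| · n ≤ 4 n^{3/4} (in particular α(G) ≤ 4 n^{3/4}), while n_{≥0}(A) ≥ n/4 for every Hermitian weighted adjacency matrix A of G. -/
open Matrix Finset
attribute [local instance] Classical.propDecidable

/-- Step 4: moments to count. -/
lemma moment_count {V : Type*} [Fintype V] (l : V → ℝ) (h1 : ∑ i, l i = 0)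
    (h2 : ∑ i, l i ^ 2 = Fintype.card V) (h3 : ∑ i, l i ^ 3 = 0)
    (h4 : ∑ i, l i ^ 4 ≤ 2 * Fintype.card V) :
    Fintype.card V ≤ 4 * Fintype.card {i : V // 0 ≤ l i} := by
  set t : ℝ := √2 with ht
  have ht2 : t ^ 2 = 2 := Real.sq_sqrt (by norm_num)
  have ht0 : 0 < t := by positivity
  have key : ∀ x : ℝ, 3 * t * x + 4 * x ^ 2 - t / 2 * x ^ 3 - x ^ 4 ≤ if 0 ≤ x then 8 else 0 := by
    intro x
    have e : 3 * t * x + 4 * x ^ 2 - t / 2 * x ^ 3 - x ^ 4 = x * (x + t) ^ 2 * (3 / 2 * t - x) := by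
      linear_combination (x * (-3 / 2 * t) - 2 * x ^ 2) * ht2
    split_ifs with h
    · have : 8 - (3 * t * x + 4 * x ^ 2 - t / 2 * x ^ 3 - x ^ 4)
          = (x - t) ^ 2 * (x ^ 2 + 5 / 2 * t * x + 4) := by
        linear_combination (-4 + 4 * x ^ 2 - x * t * 5 / 2) * ht2
      have : 0 ≤ (x - t) ^ 2 * (x ^ 2 + 5 / 2 * t * x + 4) := by positivity
      linarith
    · rw [e]
      push Not at h
      have h1 : 0 ≤ (-x) * (x + t) ^ 2 * (3 / 2 * t - x) := by
        have : 0 ≤ 3 / 2 * t - x := by linarith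
        have : 0 ≤ -x := by linarith
        positivity
      linarith
  have hs := Finset.sum_le_sum (fun i (_ : i ∈ Finset.univ) => key (l i))
  rw [← Finset.sum_filter, Finset.sum_const, nsmul_eq_mul, ← Fintype.card_subtype] at hs
  simp only [Finset.sum_add_distrib, Finset.sum_sub_distrib, ← Finset.mul_sum] at hs
  rw [h1, h2, h3] at hs
  have : (Fintype.card V : ℝ) ≤ 4 * Fintype.card {i : V // 0 ≤ l i} := by linarith
  exact_mod_cast this

lemma trace_pow_eig {V : Type*} [Fintype V] [DecidableEq V] (A : Matrix V V ℂ) (hA : A.IsHermitian)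
    (k : ℕ) : (A ^ k).trace = ((∑ i, hA.eigenvalues i ^ k : ℝ) : ℂ) := by
  conv_lhs => rw [hA.spectral_theorem]
  rw [← map_pow, Unitary.conjStarAlgAut_apply, Matrix.trace_mul_cycle]
  simp [Matrix.diagonal_pow, Matrix.trace]

lemma scaled_count {V : Type*} [Fintype V] [DecidableEq V] (G : SimpleGraph V) (A : Matrix V V ℂ) (hA : A.IsHermitian)
    (h0 : ∀ i j, ¬ G.Adj i j → A i j = 0)
    (tf : ∀ i j k, G.Adj i j → G.Adj j k → ¬ G.Adj k i)
    (cf : ∀ i j, i ≠ j → ∀ k l, G.Adj i k → G.Adj k j → G.Adj i l → G.Adj l j → k = l)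
    (hr : ∀ i, ∑ j, ‖A i j‖ ^ 2 = 1) :
    Fintype.card V ≤ 4 * Fintype.card {i : V // 0 ≤ hA.eigenvalues i} := by
  have hs : ∀ i j, A j i = star (A i j) := fun i j => (hA.apply j i).symm
  have hc : ∀ z : ℂ, z * star z = ((‖z‖ ^ 2 : ℝ) : ℂ) := by
    intro z; rw [Complex.star_def, Complex.mul_conj, Complex.normSq_eq_norm_sq]
  have hd : ∀ i, (A * A) i i = 1 := by
    intro i
    rw [Matrix.mul_apply]
    simp_rw [fun j => hs i j, hc]
    rw [← Complex.ofReal_sum, hr]; simp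
  have hoff : ∀ i j, i ≠ j → ‖(A * A) i j‖ ^ 2 = ∑ k, ‖A i k‖ ^ 2 * ‖A k j‖ ^ 2 := by
    intro i j hij
    rw [Matrix.mul_apply]
    by_cases h : ∃ k, G.Adj i k ∧ G.Adj k j
    · obtain ⟨k, hk1, hk2⟩ := h
      have hz : ∀ l, l ≠ k → A i l = 0 ∨ A l j = 0 := by
        intro l hl
        by_contra hcon
        push Not at hcon
        apply hl
        refine cf i j hij l k ?_ ?_ hk1 hk2
        · by_contra h; exact hcon.1 (h0 _ _ h)
        · by_contra h; exact hcon.2 (h0 _ _ h)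
      rw [Finset.sum_eq_single k, Finset.sum_eq_single k]
      · rw [norm_mul, mul_pow]
      · intro l _ hl; rcases hz l hl with h | h <;> simp [h]
      · simp
      · intro l _ hl; rcases hz l hl with h | h <;> simp [h]
      · simp
    · have hz : ∀ l, A i l = 0 ∨ A l j = 0 := by
        intro l
        by_contra hcon
        push Not at hcon
        apply h
        refine ⟨l, ?_, ?_⟩
        · by_contra h; exact hcon.1 (h0 _ _ h)
        · by_contra h; exact hcon.2 (h0 _ _ h)
      rw [Finset.sum_eq_zero, Finset.sum_eq_zero]
      · simp
      · intro l _; rcases hz l with h | h <;> simp [h]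
      · intro l _; rcases hz l with h | h <;> simp [h]
  have hr' : ∀ i, ∑ j, ‖A j i‖ ^ 2 = 1 := by
    intro i; rw [← hr i]; refine Finset.sum_congr rfl fun j _ => ?_
    rw [hs i j, norm_star]
  apply moment_count
  · have := trace_pow_eig A hA 1
    rw [pow_one, Matrix.trace] at this
    simp only [Matrix.diag_apply, pow_one] at this
    rw [Finset.sum_eq_zero (fun i _ => h0 i i (G.irrefl))] at this
    exact_mod_cast this.symm
  · have := trace_pow_eig A hA 2
    rw [pow_two, Matrix.trace] at this
    simp only [Matrix.diag_apply, hd] at this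
    rw [Finset.sum_const] at this
    have h' : ((∑ i, hA.eigenvalues i ^ 2 : ℝ) : ℂ) = ((Fintype.card V : ℝ) : ℂ) := by
      rw [← this]; simp
    exact_mod_cast h'
  · have := trace_pow_eig A hA 3
    rw [pow_three, Matrix.trace] at this
    rw [Finset.sum_eq_zero] at this
    · exact_mod_cast this.symm
    · intro i _
      rw [Matrix.diag_apply, Matrix.mul_apply]
      refine Finset.sum_eq_zero fun j _ => ?_
      rw [Matrix.mul_apply, Finset.mul_sum]
      refine Finset.sum_eq_zero fun k _ => ?_
      by_cases h1 : G.Adj i j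
      · by_cases h2 : G.Adj j k
        · rw [h0 k i (tf i j k h1 h2)]; simp
        · rw [h0 j k h2]; simp
      · rw [h0 i j h1]; simp
  · have := trace_pow_eig A hA 4
    have hAA : ∀ i j, (A * A) j i = star ((A * A) i j) := by
      intro i j
      have : (A * A).IsHermitian := by
        unfold Matrix.IsHermitian; rw [Matrix.conjTranspose_mul, hA.eq]
      exact (this.apply j i).symm
    have e : A ^ 4 = (A * A) * (A * A) := by rw [← pow_two, ← pow_two, ← pow_mul]
    have h' : ∑ i, hA.eigenvalues i ^ 4 = ∑ i, ∑ j, ‖(A * A) i j‖ ^ 2 := by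
      have h2 : ((A * A) * (A * A)).trace = ((∑ i, ∑ j, ‖(A * A) i j‖ ^ 2 : ℝ) : ℂ) := by
        rw [Matrix.trace, Complex.ofReal_sum]
        refine Finset.sum_congr rfl fun i _ => ?_
        rw [Matrix.diag_apply, Matrix.mul_apply, Complex.ofReal_sum]
        refine Finset.sum_congr rfl fun j _ => ?_
        rw [hAA i j, hc]
      rw [e, h2] at this
      exact_mod_cast this.symm
    rw [h']
    have hb : ∀ i j, ‖(A * A) i j‖ ^ 2 ≤ (if i = j then 1 else 0) + ∑ k, ‖A i k‖ ^ 2 * ‖A k j‖ ^ 2 := by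
      intro i j
      split_ifs with h
      · subst h
        rw [hd]
        have : 0 ≤ ∑ k, ‖A i k‖ ^ 2 * ‖A k i‖ ^ 2 := Finset.sum_nonneg fun _ _ => by positivity
        simpa using this
      · rw [hoff i j h]; simp
    calc ∑ i, ∑ j, ‖(A * A) i j‖ ^ 2 ≤ ∑ i, ∑ j, ((if i = j then 1 else 0) + ∑ k, ‖A i k‖ ^ 2 * ‖A k j‖ ^ 2) :=
          Finset.sum_le_sum fun i _ => Finset.sum_le_sum fun j _ => hb i j
      _ = ∑ i : V, (1 + 1 : ℝ) := by
          refine Finset.sum_congr rfl fun i _ => ?_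
          rw [Finset.sum_add_distrib, Finset.sum_comm]
          simp_rw [← Finset.mul_sum, hr, mul_one, hr]
          simp
      _ = _ := by simp; ring

lemma exp_lower (b c : ℝ) (hb : 0 < b) (hc : 0 < c) :
    ∃ C : ℝ, ∀ u : ℝ, c * |u| - C ≤ b * Real.exp u - c * u := by
  set s := Real.log (2 * c / b) with hs
  have hes : b * Real.exp s = 2 * c := by
    rw [hs, Real.exp_log (by positivity)]; field_simp
  refine ⟨max 0 (2 * c * (s - 1)), fun u => ?_⟩
  rcases le_total u 0 with h | h
  · rw [abs_of_nonpos h]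
    have := le_max_left 0 (2 * c * (s - 1))
    have := mul_pos hb (Real.exp_pos u)
    linarith
  · rw [abs_of_nonneg h]
    have h1 := le_max_right 0 (2 * c * (s - 1))
    have h2 : b * Real.exp u = 2 * c * Real.exp (u - s) := by
      rw [← hes, mul_assoc, ← Real.exp_add]; congr 2; ring
    have h3 := Real.add_one_le_exp (u - s)
    have h4 : 2 * c * (u - s + 1) ≤ 2 * c * Real.exp (u - s) := by gcongr
    rw [h2]; linarith

/-- On a `d`-regular graph with positive symmetric edge weights there is a diagonal scaling making
all the row sums equal to one. -/
lemma exists_scaling {V : Type*} [Fintype V] [DecidableEq V] (G : SimpleGraph V) (d : ℕ) (hd : 0 < d)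
    (hG : ∀ i, ∑ j, (if G.Adj i j then (1 : ℝ) else 0) = d)
    (b : V → V → ℝ) (hb : ∀ i j, G.Adj i j → 0 < b i j) (hb0 : ∀ i j, ¬ G.Adj i j → b i j = 0)
    (hs : ∀ i j, b i j = b j i) :
    ∃ y : V → ℝ, (∀ i, 0 < y i) ∧ ∀ i, ∑ j, b i j * (y i * y j) = 1 := by
  let E := {e : V × V // G.Adj e.1 e.2}
  let T : (V → ℝ) →ₗ[ℝ] (E → ℝ) :=
    { toFun := fun x e => x e.1.1 + x e.1.2
      map_add' := by intro x y; ext e; simp; ring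
      map_smul' := by intro c x; ext e; simp; ring }
  have hc : (0 : ℝ) < 1 / d := by positivity
  let g : (E → ℝ) → ℝ := fun u => ∑ e : E, (b e.1.1 e.1.2 * Real.exp (u e) - 1 / d * u e)
  have hsumE : ∀ f : V → V → ℝ, ∑ e : E, f e.1.1 e.1.2
      = ∑ i, ∑ j, if G.Adj i j then f i j else 0 := by
    intro f
    rw [← Finset.sum_product', ← Finset.sum_filter]
    simp only [Finset.univ_product_univ]
    rw [← Finset.sum_subtype_eq_sum_filter]
    simp [E]
  have hgT : ∀ x, g (T x) = ∑ i, ∑ j, b i j * Real.exp (x i + x j) - 2 * ∑ i, x i := by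
    intro x
    have h1 := hsumE (fun i j => b i j * Real.exp (x i + x j) - 1 / d * (x i + x j))
    have h2 : g (T x) = ∑ e : E, (b e.1.1 e.1.2 * Real.exp (x e.1.1 + x e.1.2) - 1 / d * (x e.1.1 + x e.1.2)) := rfl
    rw [h2, h1]
    have h3 : ∀ i j, (if G.Adj i j then b i j * Real.exp (x i + x j) - 1 / d * (x i + x j) else 0)
        = b i j * Real.exp (x i + x j) - (1 / d * (x i * (if G.Adj i j then (1 : ℝ) else 0))
          + 1 / d * (x j * (if G.Adj j i then (1 : ℝ) else 0))) := by
      intro i j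
      by_cases h : G.Adj i j
      · simp [h, h.symm]; ring
      · have h' : ¬ G.Adj j i := fun h' => h h'.symm
        simp [h, h', hb0 i j h]
    simp_rw [h3, Finset.sum_sub_distrib, Finset.sum_add_distrib]
    rw [Finset.sum_comm (f := fun i j => 1 / (d : ℝ) * (x j * (if G.Adj j i then (1 : ℝ) else 0)))]
    simp_rw [← Finset.mul_sum, hG]
    rw [← Finset.sum_mul]
    have : (d : ℝ) ≠ 0 := by positivity
    field_simp
    ring
  have hgc : Continuous g := by fun_prop
  have hex : ∃ u : LinearMap.range T, ∀ v : LinearMap.range T, g u.1 ≤ g v.1 := by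
    have : ProperSpace (LinearMap.range T) := FiniteDimensional.proper ℝ _
    apply Continuous.exists_forall_le (hgc.comp continuous_subtype_val)
    choose C hC using fun e : E => exp_lower (b e.1.1 e.1.2) (1 / d) (hb _ _ e.2) hc
    have hlow : ∀ u : LinearMap.range T, 1 / d * ‖u‖ - ∑ e, |C e| ≤ g u.1 := by
      intro u
      have h1 : ‖u‖ ≤ ∑ e, |u.1 e| := by
        rw [Submodule.coe_norm, pi_norm_le_iff_of_nonneg (Finset.sum_nonneg fun _ _ => abs_nonneg _)]
        intro e
        rw [Real.norm_eq_abs]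
        exact Finset.single_le_sum (f := fun e => |u.1 e|) (fun _ _ => abs_nonneg _) (Finset.mem_univ e)
      calc 1 / d * ‖u‖ - ∑ e, |C e| ≤ 1 / d * ∑ e, |u.1 e| - ∑ e, |C e| := by gcongr
        _ = ∑ e, (1 / d * |u.1 e| - |C e|) := by rw [Finset.sum_sub_distrib, Finset.mul_sum]
        _ ≤ g u.1 := by
          refine Finset.sum_le_sum fun e _ => ?_
          have := hC e (u.1 e)
          have := le_abs_self (C e)
          linarith
    refine Filter.tendsto_atTop_mono hlow ?_
    apply Filter.tendsto_atTop_add_const_right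
    exact (tendsto_norm_cocompact_atTop).const_mul_atTop hc
  obtain ⟨⟨u, x, rfl⟩, hx⟩ := hex
  have hmin : ∀ z, g (T x) ≤ g (T z) := fun z => hx ⟨T z, z, rfl⟩
  refine ⟨fun i => Real.exp (x i), fun i => Real.exp_pos _, fun i => ?_⟩
  simp_rw [← Real.exp_add]
  set r := ∑ j, b i j * Real.exp (x i + x j) with hr
  -- moving one coordinate
  have hmove : ∀ t : ℝ, 0 ≤ r * (Real.exp t - 1) - t := by
    intro t
    have h := hmin (fun k => x k + if k = i then t else 0)
    rw [hgT, hgT] at h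
    have hbii : b i i = 0 := hb0 i i G.irrefl
    have e1 : ∀ k j, b k j * Real.exp ((x k + if k = i then t else 0) + (x j + if j = i then t else 0))
        = b k j * Real.exp (x k + x j) + (if k = i then b i j * Real.exp (x i + x j) * (Real.exp t - 1) else 0)
          + (if j = i then b i k * Real.exp (x i + x k) * (Real.exp t - 1) else 0) := by
      intro k j
      by_cases hk : k = i
      · subst hk
        by_cases hj : j = k
        · subst hj; simp [hbii]
        · simp only [hj, if_true, if_false, add_zero]
          rw [show x k + t + x j = (x k + x j) + t by ring, Real.exp_add _ t]; ring
      · by_cases hj : j = i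
        · subst hj; simp only [hk, if_true, if_false, add_zero]
          rw [show x k + (x j + t) = (x j + x k) + t by ring, Real.exp_add _ t, hs k j, add_comm (x k)]; ring
        · simp [hk, hj]
    simp_rw [e1, Finset.sum_add_distrib] at h
    rw [Finset.sum_comm (f := fun k j => if k = i then b i j * Real.exp (x i + x j) * (Real.exp t - 1) else 0)] at h
    simp only [Finset.sum_ite_eq', Finset.mem_univ, if_true] at h
    rw [← Finset.sum_mul, ← hr] at h
    linarith
  have hr0 : 0 < r := by
    by_contra hcon
    have h1 := hmove 1
    have h2 := Real.add_one_le_exp 1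
    nlinarith
  by_contra hne
  have h1 := hmove (- Real.log r)
  rw [Real.exp_neg, Real.exp_log hr0] at h1
  have h2 := Real.log_lt_sub_one_of_pos hr0 hne
  have h3 : r * (r⁻¹ - 1) = 1 - r := by field_simp
  linarith

lemma quad_eig {V : Type*} [Fintype V] [DecidableEq V] (A : Matrix V V ℂ) (hA : A.IsHermitian) (x : V → ℂ) :
    (star x ⬝ᵥ A *ᵥ x).re = ∑ i, hA.eigenvalues i *
      ‖((star (hA.eigenvectorUnitary : Matrix V V ℂ)) *ᵥ x) i‖ ^ 2 := by
  set U : Matrix V V ℂ := (hA.eigenvectorUnitary : Matrix V V ℂ)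
  have h : A = U * diagonal (RCLike.ofReal ∘ hA.eigenvalues) * star U := by
    conv_lhs => rw [hA.spectral_theorem, Unitary.conjStarAlgAut_apply]
  conv_lhs => rw [h]
  rw [← Matrix.mulVec_mulVec, ← Matrix.mulVec_mulVec, Matrix.dotProduct_mulVec,
    show star x ᵥ* U = star (star U *ᵥ x) by
      rw [Matrix.star_mulVec, Matrix.star_eq_conjTranspose, Matrix.conjTranspose_conjTranspose]]
  rw [dotProduct, Complex.re_sum]
  refine Finset.sum_congr rfl fun i _ => ?_
  rw [Matrix.mulVec_diagonal]
  simp only [Pi.star_apply, Function.comp]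
  generalize (star U *ᵥ x) i = z
  rw [show star z * (RCLike.ofReal (hA.eigenvalues i) * z) = ((hA.eigenvalues i : ℝ) : ℂ) * (z * star z) by
    rw [RCLike.ofReal_eq_complex_ofReal]; ring,
    Complex.star_def, Complex.mul_conj, Complex.normSq_eq_norm_sq, ← Complex.ofReal_mul, Complex.ofReal_re]

lemma norm_eig {V : Type*} [Fintype V] [DecidableEq V] (U : Matrix V V ℂ) (hU : U * star U = 1) (x : V → ℂ) :
    ∑ i, ‖((star U) *ᵥ x) i‖ ^ 2 = ∑ i, ‖x i‖ ^ 2 := by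
  have key : ∀ z : V → ℂ, ((∑ i, ‖z i‖ ^ 2 : ℝ) : ℂ) = star z ⬝ᵥ z := by
    intro z
    rw [dotProduct, Complex.ofReal_sum]
    refine Finset.sum_congr rfl fun i _ => ?_
    rw [Pi.star_apply, mul_comm, Complex.star_def, Complex.mul_conj, Complex.normSq_eq_norm_sq]
  have : ((∑ i, ‖((star U) *ᵥ x) i‖ ^ 2 : ℝ) : ℂ) = ((∑ i, ‖x i‖ ^ 2 : ℝ) : ℂ) := by
    rw [key, key, Matrix.star_mulVec, Matrix.dotProduct_mulVec, Matrix.vecMul_vecMul,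
      Matrix.star_eq_conjTranspose, Matrix.conjTranspose_conjTranspose, ← Matrix.star_eq_conjTranspose, hU,
      Matrix.vecMul_one]
  exact_mod_cast this

/-- If `B` has more non-negative eigenvalues than `A`, there is a vector on which `A` is quite
negative and `B` (after a change of variables) is non-negative. -/
lemma exists_vec {V : Type*} [Fintype V] [DecidableEq V] (A B D : Matrix V V ℂ) (hA : A.IsHermitian)
    (hB : B.IsHermitian) (δ : ℝ) (hδ : ∀ i, hA.eigenvalues i < 0 → hA.eigenvalues i ≤ - δ)
    (hk : Fintype.card {i : V // 0 ≤ hA.eigenvalues i} < Fintype.card {i : V // 0 ≤ hB.eigenvalues i}) :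
    ∃ z : V → ℂ, z ≠ 0 ∧ (star (D *ᵥ z) ⬝ᵥ A *ᵥ (D *ᵥ z)).re ≤ - δ * ∑ i, ‖(D *ᵥ z) i‖ ^ 2 ∧
      0 ≤ (star z ⬝ᵥ B *ᵥ z).re := by
  set UA : Matrix V V ℂ := (hA.eigenvectorUnitary : Matrix V V ℂ) with hUA
  set UB : Matrix V V ℂ := (hB.eigenvectorUnitary : Matrix V V ℂ) with hUB
  let f : (V → ℂ) →ₗ[ℂ] ({i : V // 0 ≤ hA.eigenvalues i} → ℂ) × ({i : V // ¬ 0 ≤ hB.eigenvalues i} → ℂ) :=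
    LinearMap.prod
      ((LinearMap.funLeft ℂ ℂ Subtype.val).comp (Matrix.mulVecLin (star UA * D)))
      ((LinearMap.funLeft ℂ ℂ Subtype.val).comp (Matrix.mulVecLin (star UB)))
  have hker : LinearMap.ker f ≠ ⊥ := by
    apply LinearMap.ker_ne_bot_of_finrank_lt
    rw [Module.finrank_prod]
    simp only [Module.finrank_fintype_fun_eq_card]
    have := Fintype.card_subtype_compl (fun i => 0 ≤ hB.eigenvalues i)
    have h2 := Fintype.card_subtype_le (fun i => 0 ≤ hB.eigenvalues i)
    rw [this]; omega
  obtain ⟨z, hz, hz0⟩ := Submodule.exists_mem_ne_zero_of_ne_bot hker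
  rw [LinearMap.mem_ker] at hz
  have hzA : ∀ i, 0 ≤ hA.eigenvalues i → (star UA *ᵥ (D *ᵥ z)) i = 0 := by
    intro i hi
    have := congrFun (congrArg Prod.fst hz) ⟨i, hi⟩
    rw [Matrix.mulVec_mulVec]
    exact this
  have hzB : ∀ i, ¬ 0 ≤ hB.eigenvalues i → (star UB *ᵥ z) i = 0 := by
    intro i hi
    exact congrFun (congrArg Prod.snd hz) ⟨i, hi⟩
  refine ⟨z, hz0, ?_, ?_⟩
  · rw [quad_eig A hA, ← norm_eig UA (by rw [hUA]; exact Unitary.coe_mul_star_self _), Finset.mul_sum]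
    refine Finset.sum_le_sum fun i _ => ?_
    by_cases hi : 0 ≤ hA.eigenvalues i
    · rw [← hUA, hzA i hi]; simp
    · have := hδ i (by linarith)
      exact mul_le_mul_of_nonneg_right this (by positivity)
  · rw [quad_eig B hB]
    refine Finset.sum_nonneg fun i _ => ?_
    by_cases hi : 0 ≤ hB.eigenvalues i
    · positivity
    · rw [← hUB, hzB i hi]; simp

lemma quad_bound {V : Type*} [Fintype V] (C : Matrix V V ℂ) (x : V → ℂ) :
    (star x ⬝ᵥ C *ᵥ x).re ≤ (∑ i, ∑ j, ‖C i j‖) * ∑ i, ‖x i‖ ^ 2 := by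
  have h1 : star x ⬝ᵥ C *ᵥ x = ∑ i, ∑ j, star (x i) * (C i j * x j) := by
    simp [dotProduct, Matrix.mulVec, Finset.mul_sum]
  refine (Complex.re_le_norm _).trans ?_
  rw [h1, Finset.sum_mul]
  refine (norm_sum_le _ _).trans (Finset.sum_le_sum fun i _ => ?_)
  rw [Finset.sum_mul]
  refine (norm_sum_le _ _).trans (Finset.sum_le_sum fun j _ => ?_)
  rw [norm_mul, norm_mul, norm_star]
  have hi := Finset.single_le_sum (f := fun i => ‖x i‖ ^ 2) (fun _ _ => by positivity) (Finset.mem_univ i)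
  have hj := Finset.single_le_sum (f := fun i => ‖x i‖ ^ 2) (fun _ _ => by positivity) (Finset.mem_univ j)
  have : ‖x i‖ * ‖x j‖ ≤ ∑ i, ‖x i‖ ^ 2 := by
    nlinarith [sq_nonneg (‖x i‖ - ‖x j‖)]
  calc _ = ‖C i j‖ * (‖x i‖ * ‖x j‖) := by ring
    _ ≤ _ := by gcongr

lemma exists_delta {V : Type*} [Fintype V] (l : V → ℝ) : ∃ δ > 0, ∀ i, l i < 0 → l i ≤ -δ := by
  by_cases h : (Finset.univ.filter (fun i => l i < 0)).Nonempty
  · obtain ⟨m, hm, hm'⟩ := Finset.exists_max_image _ l h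
    refine ⟨- l m, ?_, fun i hi => ?_⟩
    · simp at hm; linarith
    · rw [neg_neg]; exact hm' i (by simpa using hi)
  · refine ⟨1, one_pos, fun i hi => (h ⟨i, by simpa using hi⟩).elim⟩

/-- The inertia lower bound for regular graphs of girth at least five. -/
lemma inertia_girth_five {V : Type*} [Fintype V] [DecidableEq V] (G : SimpleGraph V) (d : ℕ) (hd : 0 < d)
    (hG : ∀ i, ∑ j, (if G.Adj i j then (1 : ℝ) else 0) = d)
    (tf : ∀ i j k, G.Adj i j → G.Adj j k → ¬ G.Adj k i)
    (cf : ∀ i j, i ≠ j → ∀ k l, G.Adj i k → G.Adj k j → G.Adj i l → G.Adj l j → k = l)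
    (A : Matrix V V ℂ) (hA : A.IsHermitian) (h0 : ∀ i j, ¬ G.Adj i j → A i j = 0) :
    Fintype.card V ≤ 4 * Fintype.card {i : V // 0 ≤ hA.eigenvalues i} := by
  obtain ⟨δ, hδ, hδ'⟩ := exists_delta hA.eigenvalues
  obtain ⟨C, hC⟩ : ∃ C : Matrix V V ℂ, ∀ i j, C i j = if G.Adj i j ∧ A i j = 0 then 1 else 0 :=
    ⟨Matrix.of fun i j => if G.Adj i j ∧ A i j = 0 then 1 else 0, fun _ _ => rfl⟩
  have hCh : C.IsHermitian := by
    ext i j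
    have : (G.Adj j i ∧ A j i = 0) ↔ (G.Adj i j ∧ A i j = 0) := by
      rw [G.adj_comm j i, ← hA.apply i j, star_eq_zero]
    simp only [Matrix.conjTranspose_apply, hC, this]
    split_ifs <;> simp
  set M : ℝ := ∑ i, ∑ j, ‖C i j‖ with hM
  have hM0 : 0 ≤ M := Finset.sum_nonneg fun _ _ => Finset.sum_nonneg fun _ _ => norm_nonneg _
  set ε : ℝ := δ / (2 * (M + 1)) with hε
  have hε0 : 0 < ε := by positivity
  let A1 : Matrix V V ℂ := A + (ε : ℂ) • C
  have hA1 : A1.IsHermitian := by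
    refine hA.add ?_
    unfold Matrix.IsHermitian
    rw [Matrix.conjTranspose_smul, hCh.eq, Complex.star_def, Complex.conj_ofReal]
  have hA10 : ∀ i j, ¬ G.Adj i j → A1 i j = 0 := by
    intro i j h
    simp [A1, hC, h, h0 i j h]
  have hA11 : ∀ i j, G.Adj i j → A1 i j ≠ 0 := by
    intro i j h
    by_cases h' : A i j = 0
    · simp [A1, hC, h, h', hε0.ne']
    · simp [A1, hC, h']
  obtain ⟨y, hy, hy1⟩ := exists_scaling G d hd hG (fun i j => ‖A1 i j‖ ^ 2)
    (fun i j h => by have := norm_pos_iff.mpr (hA11 i j h); positivity)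
    (fun i j h => by simp [hA10 i j h])
    (fun i j => by rw [← hA1.apply i j, norm_star])
  let D : Matrix V V ℂ := Matrix.diagonal fun i => ((√(y i) : ℝ) : ℂ)
  have hD : Dᴴ = D := by
    simp only [D, Matrix.diagonal_conjTranspose]
    congr 1; ext i; simp
  let B : Matrix V V ℂ := D * A1 * D
  have hB : B.IsHermitian := by
    unfold Matrix.IsHermitian
    simp only [B]
    rw [Matrix.conjTranspose_mul, Matrix.conjTranspose_mul, hD, hA1.eq, Matrix.mul_assoc]
  have hBij : ∀ i j, B i j = (√(y i) : ℝ) * A1 i j * (√(y j) : ℝ) := by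
    intro i j
    simp only [B, D]
    rw [Matrix.mul_diagonal, Matrix.diagonal_mul]
  have hcount := scaled_count G B hB (fun i j h => by rw [hBij, hA10 i j h]; simp) tf cf (fun i => by
    rw [← hy1 i]
    refine Finset.sum_congr rfl fun j _ => ?_
    rw [hBij, norm_mul, norm_mul, Complex.norm_real, Complex.norm_real, mul_pow, mul_pow,
      Real.norm_eq_abs, Real.norm_eq_abs, sq_abs, sq_abs, Real.sq_sqrt (hy i).le, Real.sq_sqrt (hy j).le]
    ring)
  by_contra hcon
  obtain ⟨z, hz0, hz1, hz2⟩ := exists_vec A B D hA hB δ hδ' (by omega)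
  have e : star z ⬝ᵥ B *ᵥ z = star (D *ᵥ z) ⬝ᵥ A1 *ᵥ (D *ᵥ z) := by
    simp only [B]
    rw [← Matrix.mulVec_mulVec, ← Matrix.mulVec_mulVec, Matrix.dotProduct_mulVec, Matrix.star_mulVec, hD]
  set x := D *ᵥ z with hx
  have hxi : ∀ i, x i = (√(y i) : ℝ) * z i := fun i => by rw [hx]; exact Matrix.mulVec_diagonal _ _ _
  have hS : 0 < ∑ i, ‖x i‖ ^ 2 := by
    obtain ⟨i, hi⟩ := Function.ne_iff.mp hz0
    refine Finset.sum_pos' (fun _ _ => by positivity) ⟨i, Finset.mem_univ _, ?_⟩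
    have : x i ≠ 0 := by
      rw [hxi]
      exact mul_ne_zero (by exact_mod_cast (Real.sqrt_pos.mpr (hy i)).ne') hi
    have := norm_pos_iff.mpr this
    positivity
  set S := ∑ i, ‖x i‖ ^ 2
  have hq := quad_bound C x
  rw [e] at hz2
  have e2 : (star x ⬝ᵥ A1 *ᵥ x).re = (star x ⬝ᵥ A *ᵥ x).re + ε * (star x ⬝ᵥ C *ᵥ x).re := by
    simp only [A1]
    rw [Matrix.add_mulVec, dotProduct_add, Matrix.smul_mulVec, dotProduct_smul, Complex.add_re, smul_eq_mul,
      Complex.re_ofReal_mul]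
  rw [e2] at hz2
  have h3 : ε * (star x ⬝ᵥ C *ᵥ x).re ≤ ε * (M * S) := by gcongr
  have h4 : ε * (M + 1) = δ / 2 := by rw [hε]; field_simp
  have h5 : ε * (M * S) = δ / 2 * S - ε * S := by rw [← h4]; ring
  have := mul_pos hε0 hS
  have := mul_pos hδ hS
  linarith

/-- The set of `t` with `t ^ 2 - E` a square has size `(q - 1) / 2` for `E` a non-square. -/
lemma card_bad {K : Type*} [Field K] [Fintype K] [DecidableEq K] (h2 : (2 : K) ≠ 0) (E : K) (hE : ¬ IsSquare E) :
    2 * (Finset.univ.filter fun t : K => IsSquare (t ^ 2 - E)).card + 1 = Fintype.card K := by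
  have hE0 : E ≠ 0 := fun h => hE (h ▸ IsSquare.zero)
  have hmap : Set.MapsTo (fun u : K => (u + E / u) / 2) ((Finset.univ.erase (0 : K) : Finset K) : Set K)
      ((Finset.univ.filter fun t : K => IsSquare (t ^ 2 - E) : Finset K) : Set K) := by
    intro u hu
    have hu0 : u ≠ 0 := by simpa using hu
    simp only [Finset.coe_filter, Finset.mem_univ, true_and, Set.mem_ofPred_eq]
    refine ⟨(u - E / u) / 2, ?_⟩
    field_simp
    ring
  have h := Finset.card_eq_sum_card_fiberwise hmap
  rw [Finset.sum_congr rfl (g := fun _ => 2)] at h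
  · rw [Finset.card_erase_of_mem (Finset.mem_univ _), Finset.sum_const, Finset.card_univ, smul_eq_mul] at h
    have : 0 < Fintype.card K := Fintype.card_pos
    omega
  · intro t ht
    obtain ⟨s, hs⟩ := (Finset.mem_filter.mp ht).2
    have hs0 : s ≠ 0 := by
      rintro rfl
      exact hE ⟨t, by linear_combination -hs⟩
    have hne : t + s ≠ t - s := by
      intro h
      have : 2 * s = 0 := by linear_combination h
      simp [h2, hs0] at this
    rw [← Finset.card_pair hne]
    congr 1
    ext u
    simp only [Finset.mem_filter, Finset.mem_erase, Finset.mem_univ, and_true, Finset.mem_insert,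
      Finset.mem_singleton]
    constructor
    · rintro ⟨hu, h⟩
      have h' : u ^ 2 + E = 2 * t * u := by
        field_simp at h; linear_combination h
      have : (u - (t + s)) * (u - (t - s)) = 0 := by linear_combination h' + hs
      rcases mul_eq_zero.mp this with h | h
      · left; linear_combination h
      · right; linear_combination h
    · intro h
      have h' : (u - (t + s)) * (u - (t - s)) = 0 := by
        rcases h with h | h <;> rw [h] <;> ring
      have h'' : u ^ 2 + E = 2 * t * u := by linear_combination h' - hs
      have hu : u ≠ 0 := by
        rintro rfl
        apply hE0; linear_combination h''
      refine ⟨hu, ?_⟩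
      field_simp
      linear_combination h''

/-- The full quadratic form bound on `K × K`. -/
lemma full_bound {K : Type*} [Field K] [Fintype K] [DecidableEq K] (h2 : (2 : K) ≠ 0) (w : K → K → ℝ)
    (hw : ∑ a, ∑ E, w a E = 0) :
    (∑ a, ∑ E, w a E * ∑ b, w b ((a - b) ^ 2 - E)) ^ 2
      ≤ Fintype.card K * (∑ a, ∑ E, w a E ^ 2) ^ 2 := by
  have hM : ∑ a, ∑ E, (∑ b, w b ((a - b) ^ 2 - E)) ^ 2 ≤ Fintype.card K * ∑ a, ∑ E, w a E ^ 2 := by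
    have e1 : ∀ b c : K, ∑ a, ∑ E, w b ((a - b) ^ 2 - E) * w c ((a - c) ^ 2 - E)
        = if b = c then Fintype.card K * ∑ E, w b E ^ 2 else (∑ E, w b E) * (∑ E, w c E) := by
      intro b c
      split_ifs with h
      · subst h
        have : ∀ a, ∑ E, w b ((a - b) ^ 2 - E) * w b ((a - b) ^ 2 - E) = ∑ E, w b E ^ 2 := by
          intro a
          rw [← (Equiv.subLeft ((a - b) ^ 2)).sum_comp (fun E => w b E ^ 2)]
          simp [pow_two]
        simp_rw [this]
        simp
      · rw [Finset.sum_mul_sum, ← Finset.sum_product', ← Finset.sum_product']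
        have hbc : c - b ≠ 0 := sub_ne_zero.mpr (Ne.symm h)
        refine Finset.sum_bij' (fun x _ => ((x.1 - b) ^ 2 - x.2, (x.1 - c) ^ 2 - x.2))
          (fun z _ => (((z.1 - z.2) / (c - b) + (b + c)) / 2,
            (((z.1 - z.2) / (c - b) + (b + c)) / 2 - b) ^ 2 - z.1)) ?_ ?_ ?_ ?_ ?_
        · simp
        · simp
        · rintro ⟨a, E⟩ _
          have : (((a - b) ^ 2 - E - ((a - c) ^ 2 - E)) / (c - b) + (b + c)) / 2 = a := by
            field_simp; ring
          simp only [this, Prod.mk.injEq, true_and]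
          ring
        · rintro ⟨u, v⟩ _
          simp only [Prod.mk.injEq]
          constructor
          · ring
          · field_simp; ring
        · simp
    calc ∑ a, ∑ E, (∑ b, w b ((a - b) ^ 2 - E)) ^ 2
        = ∑ b, ∑ c, ∑ a, ∑ E, w b ((a - b) ^ 2 - E) * w c ((a - c) ^ 2 - E) := by
          simp_rw [pow_two (∑ b, w b _), Finset.sum_mul_sum]
          simp_rw [fun a => Finset.sum_comm (s := (Finset.univ : Finset K)) (t := (Finset.univ : Finset K))
            (f := fun E b => ∑ c, w b ((a - b) ^ 2 - E) * w c ((a - c) ^ 2 - E))]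
          rw [Finset.sum_comm]
          refine Finset.sum_congr rfl fun b _ => ?_
          simp_rw [fun a => Finset.sum_comm (s := (Finset.univ : Finset K)) (t := (Finset.univ : Finset K))
            (f := fun E c => w b ((a - b) ^ 2 - E) * w c ((a - c) ^ 2 - E))]
          rw [Finset.sum_comm]
      _ = ∑ b, ∑ c, ((∑ E, w b E) * (∑ E, w c E) + if b = c then
            (Fintype.card K * ∑ E, w b E ^ 2 - (∑ E, w b E) ^ 2) else 0) := by
          refine Finset.sum_congr rfl fun b _ => Finset.sum_congr rfl fun c _ => ?_
          rw [e1]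
          split_ifs with h
          · subst h; ring
          · ring
      _ = (∑ b, ∑ E, w b E) ^ 2 + (Fintype.card K * ∑ a, ∑ E, w a E ^ 2 - ∑ b, (∑ E, w b E) ^ 2) := by
          simp_rw [Finset.sum_add_distrib]
          rw [pow_two (∑ b, ∑ E, w b E), Finset.sum_mul_sum]
          simp [Finset.sum_sub_distrib, Finset.mul_sum]
      _ ≤ _ := by
          rw [hw]
          have : 0 ≤ ∑ b, (∑ E, w b E) ^ 2 := Finset.sum_nonneg fun _ _ => sq_nonneg _
          linarith
  have hcs := Finset.sum_mul_sq_le_sq_mul_sq (Finset.univ : Finset (K × K)) (fun x => w x.1 x.2)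
    (fun x => ∑ b, w b ((x.1 - b) ^ 2 - x.2))
  rw [← Finset.univ_product_univ, Finset.sum_product, Finset.sum_product, Finset.sum_product] at hcs
  have hnn : 0 ≤ ∑ a, ∑ E, w a E ^ 2 := Finset.sum_nonneg fun _ _ => Finset.sum_nonneg fun _ _ => sq_nonneg _
  calc _ ≤ _ := hcs
    _ ≤ (∑ a, ∑ E, w a E ^ 2) * (Fintype.card K * ∑ a, ∑ E, w a E ^ 2) := by gcongr
    _ = _ := by ring

/-- The graph. -/
def parsonsGraph (K : Type*) [Field K] (h2 : (2 : K) ≠ 0) : SimpleGraph {x : K × K // ¬ IsSquare x.2} where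
  Adj x y := x.1.2 + y.1.2 = (x.1.1 - y.1.1) ^ 2
  symm := ⟨by intro x y h; rw [add_comm, h]; ring⟩
  loopless := ⟨by
    intro x h
    apply x.2
    have : 2 * x.1.2 = 0 := by linear_combination h
    have : x.1.2 = 0 := by simpa [h2] using this
    rw [this]; exact IsSquare.zero⟩

lemma parsons_cf (K : Type*) [Field K] (h2 : (2 : K) ≠ 0) (i j : {x : K × K // ¬ IsSquare x.2}) (hij : i ≠ j)
    (k l) (h1 : (parsonsGraph K h2).Adj i k) (h3 : (parsonsGraph K h2).Adj k j)
    (h4 : (parsonsGraph K h2).Adj i l) (h5 : (parsonsGraph K h2).Adj l j) : k = l := by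
  obtain ⟨⟨a, E⟩, hi⟩ := i
  obtain ⟨⟨a', E'⟩, hj⟩ := j
  obtain ⟨⟨b, F⟩, hk⟩ := k
  obtain ⟨⟨c, H⟩, hl⟩ := l
  simp only [parsonsGraph] at h1 h3 h4 h5
  have h : 2 * ((a - a') * (b - c)) = 0 := by linear_combination h1 - h3 - h4 + h5
  rcases mul_eq_zero.mp ((mul_eq_zero.mp h).resolve_left h2) with h | h
  · exfalso; apply hij
    have ha : a = a' := sub_eq_zero.mp h
    subst ha
    have : E = E' := by linear_combination h1 - h3
    subst this; rfl
  · have ha : b = c := sub_eq_zero.mp h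
    subst ha
    have : F = H := by linear_combination h1 - h4
    subst this; rfl

lemma parsons_tf (K : Type*) [Field K] [Fintype K] [DecidableEq K] (h2 : (2 : K) ≠ 0) (hm : IsSquare (-1 : K))
    (i j k : {x : K × K // ¬ IsSquare x.2})
    (h1 : (parsonsGraph K h2).Adj i j) (h3 : (parsonsGraph K h2).Adj j k) :
    ¬ (parsonsGraph K h2).Adj k i := by
  intro h4
  obtain ⟨⟨a, E⟩, hi⟩ := i
  obtain ⟨⟨b, F⟩, hj⟩ := j
  obtain ⟨⟨c, H⟩, hk⟩ := k
  simp only [parsonsGraph] at h1 h3 h4 hi hj hk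
  have e1 : E = (a - b) * (a - c) := by
    apply mul_left_cancel₀ h2; linear_combination h1 - h3 + h4
  have e2 : F = -((a - b) * (b - c)) := by
    apply mul_left_cancel₀ h2; linear_combination h1 + h3 - h4
  have e3 : H = (b - c) * (a - c) := by
    apply mul_left_cancel₀ h2; linear_combination -h1 + h3 + h4
  obtain ⟨m, hm⟩ := hm
  have hsq : IsSquare (E * F * H) :=
    ⟨m * ((a - b) * (b - c) * (a - c)), by rw [e1, e2, e3]; linear_combination ((a - b) * (b - c) * (a - c)) ^ 2 * hm⟩
  have hF : ringChar K ≠ 2 := by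
    intro h
    apply h2
    have := ringChar.Nat.cast_ringChar (R := K)
    rw [h] at this
    exact_mod_cast this
  rw [← quadraticChar_neg_one_iff_not_isSquare] at hi hj hk
  have : ¬ IsSquare (E * F * H) := by
    rw [← quadraticChar_neg_one_iff_not_isSquare, map_mul, map_mul, hi, hj, hk]; norm_num
  exact this hsq

lemma sum_ext {K : Type*} [Field K] [Fintype K] [DecidableEq K] (f : K → K → ℝ) :
    ∑ x : {x : K × K // ¬ IsSquare x.2}, f x.1.1 x.1.2 = ∑ a, ∑ E, if ¬ IsSquare E then f a E else 0 := by
  rw [← Finset.sum_product', ← Finset.sum_filter]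
  simp only [Finset.univ_product_univ]
  rw [← Finset.sum_subtype_eq_sum_filter]
  simp

lemma parsons_deg (K : Type*) [Field K] [Fintype K] [DecidableEq K] (h2 : (2 : K) ≠ 0)
    (i : {x : K × K // ¬ IsSquare x.2}) :
    ∑ j, (if (parsonsGraph K h2).Adj i j then (1 : ℝ) else 0) = (Fintype.card K + 1) / 2 := by
  obtain ⟨⟨a, E⟩, hi⟩ := i
  simp only at hi
  have := sum_ext (K := K) (fun b F => if E + F = (a - b) ^ 2 then (1 : ℝ) else 0)
  refine Eq.trans ?_ (this.trans ?_)
  · exact Finset.sum_congr rfl fun j _ => if_congr Iff.rfl rfl rfl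
  have h3 : ∀ b, ∑ F, (if ¬ IsSquare F then (if E + F = (a - b) ^ 2 then (1 : ℝ) else 0) else 0)
      = 1 - if IsSquare ((a - b) ^ 2 - E) then (1 : ℝ) else 0 := by
    intro b
    rw [Finset.sum_eq_single ((a - b) ^ 2 - E)]
    · by_cases h : IsSquare ((a - b) ^ 2 - E) <;> simp [h]
    · intro F _ hF
      have : E + F ≠ (a - b) ^ 2 := fun h => hF (by linear_combination h)
      simp [this]
    · simp
  simp_rw [h3]
  refine ((Equiv.subLeft a).sum_comp (fun t => 1 - if IsSquare (t ^ 2 - E) then (1 : ℝ) else 0)).trans ?_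
  rw [Finset.sum_sub_distrib, Finset.sum_boole]
  have h4 := card_bad h2 E hi
  have h5 : 2 * ((Finset.univ.filter fun t : K => IsSquare (t ^ 2 - E)).card : ℝ) + 1 = Fintype.card K := by
    exact_mod_cast h4
  simp only [Finset.sum_const, Finset.card_univ, nsmul_eq_mul, mul_one]
  linarith

lemma parsons_quad (K : Type*) [Field K] [Fintype K] [DecidableEq K] (h2 : (2 : K) ≠ 0)
    (w : {x : K × K // ¬ IsSquare x.2} → ℝ) (hw : ∑ i, w i = 0) :
    (∑ i, ∑ j, w i * w j * (if (parsonsGraph K h2).Adj i j then (1 : ℝ) else 0)) ^ 2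
      ≤ Fintype.card K * (∑ i, w i ^ 2) ^ 2 := by
  let W : K → K → ℝ := fun a E => if h : ¬ IsSquare E then w ⟨(a, E), h⟩ else 0
  have hWw : ∀ i, w i = W i.1.1 i.1.2 := by
    rintro ⟨⟨a, E⟩, h⟩
    simp only at h
    simp [W, h]
  have hW0 : ∀ a E, IsSquare E → W a E = 0 := by
    intro a E h; simp [W, h]
  have s1 : ∑ i, w i = ∑ a, ∑ E, W a E := by
    simp_rw [hWw]
    rw [sum_ext (K := K) W]
    refine Finset.sum_congr rfl fun a _ => Finset.sum_congr rfl fun E _ => ?_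
    by_cases h : IsSquare E <;> simp [h, hW0]
  have s2 : ∑ i, w i ^ 2 = ∑ a, ∑ E, W a E ^ 2 := by
    simp_rw [hWw]
    rw [sum_ext (K := K) (fun a E => W a E ^ 2)]
    refine Finset.sum_congr rfl fun a _ => Finset.sum_congr rfl fun E _ => ?_
    by_cases h : IsSquare E <;> simp [h, hW0]
  have s3 : ∀ i : {x : K × K // ¬ IsSquare x.2},
      ∑ j, w i * w j * (if (parsonsGraph K h2).Adj i j then (1 : ℝ) else 0)
      = W i.1.1 i.1.2 * ∑ b, W b ((i.1.1 - b) ^ 2 - i.1.2) := by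
    intro i
    have := sum_ext (K := K)
      (fun b F => W b F * (if i.1.2 + F = (i.1.1 - b) ^ 2 then (1 : ℝ) else 0))
    simp_rw [mul_assoc, ← Finset.mul_sum, hWw]
    congr 1
    refine Eq.trans ?_ (this.trans (Finset.sum_congr rfl fun b _ => ?_))
    · exact Finset.sum_congr rfl fun j _ => congrArg _ (if_congr Iff.rfl rfl rfl)
    rw [Finset.sum_eq_single ((i.1.1 - b) ^ 2 - i.1.2)]
    · by_cases h : IsSquare ((i.1.1 - b) ^ 2 - i.1.2) <;> simp [h, hW0]
    · intro F _ hF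
      have : i.1.2 + F ≠ (i.1.1 - b) ^ 2 := fun h => hF (by linear_combination h)
      simp [this]
    · simp
  have s4 : ∑ i, ∑ j, w i * w j * (if (parsonsGraph K h2).Adj i j then (1 : ℝ) else 0)
      = ∑ a, ∑ E, W a E * ∑ b, W b ((a - b) ^ 2 - E) := by
    simp_rw [s3]
    rw [sum_ext (K := K) (fun a E => W a E * ∑ b, W b ((a - b) ^ 2 - E))]
    refine Finset.sum_congr rfl fun a _ => Finset.sum_congr rfl fun E _ => ?_
    by_cases h : IsSquare E <;> simp [h, hW0]
  rw [s4, s2]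
  exact full_bound h2 W (s1 ▸ hw)

lemma exists_graph (p : ℕ) (hp : p.Prime) (hp4 : p % 4 = 1) :
    ∃ (n : ℕ) (G : SimpleGraph (Fin n)) (d : ℕ), p ≤ n ∧ n ≤ p ^ 2 ∧ 2 * d = p + 1 ∧
      (∀ i, ∑ j, (if G.Adj i j then (1 : ℝ) else 0) = d) ∧
      (∀ i j k, G.Adj i j → G.Adj j k → ¬ G.Adj k i) ∧
      (∀ i j, i ≠ j → ∀ k l, G.Adj i k → G.Adj k j → G.Adj i l → G.Adj l j → k = l) ∧
      (∀ w : Fin n → ℝ, ∑ i, w i = 0 →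
        (∑ i, ∑ j, w i * w j * (if G.Adj i j then (1 : ℝ) else 0)) ^ 2 ≤ p * (∑ i, w i ^ 2) ^ 2) := by
  have : Fact p.Prime := ⟨hp⟩
  have hp2 : p ≠ 2 := by rintro rfl; omega
  have h2 : (2 : ZMod p) ≠ 0 := by
    intro h
    have h' : ((2 : ℕ) : ZMod p) = 0 := by exact_mod_cast h
    rw [ZMod.natCast_eq_zero_iff] at h'
    exact hp2 ((Nat.prime_dvd_prime_iff_eq hp Nat.prime_two).mp h')
  have hm : IsSquare (-1 : ZMod p) := by
    rw [ZMod.exists_sq_eq_neg_one_iff]; omega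
  have hF : ringChar (ZMod p) ≠ 2 := by rw [ZMod.ringChar_zmod_n]; exact hp2
  obtain ⟨E, hE⟩ := FiniteField.exists_nonsquare hF
  let V := {x : ZMod p × ZMod p // ¬ IsSquare x.2}
  let e : Fin (Fintype.card V) ≃ V := (Fintype.equivFin V).symm
  let G0 := parsonsGraph (ZMod p) h2
  refine ⟨Fintype.card V, G0.comap e, (p + 1) / 2, ?_, ?_, by omega, ?_, ?_, ?_, ?_⟩
  · have := Fintype.card_le_of_injective (fun a : ZMod p => (⟨(a, E), hE⟩ : V)) (by
      intro a b h; simpa using h)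
    rwa [ZMod.card] at this
  · have := Fintype.card_subtype_le (fun x : ZMod p × ZMod p => ¬ IsSquare x.2)
    rw [Fintype.card_prod, ZMod.card, ← pow_two] at this
    exact this
  · intro i
    have h := parsons_deg (ZMod p) h2 (e i)
    rw [← e.sum_comp, ZMod.card] at h
    have hd : (((p + 1) / 2 : ℕ) : ℝ) = (p + 1) / 2 := by
      have : 2 * ((p + 1) / 2) = p + 1 := by omega
      have : (2 : ℝ) * ((p + 1) / 2 : ℕ) = p + 1 := by exact_mod_cast this
      linarith
    rw [hd, ← h]
    rfl
  · intro i j k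
    exact parsons_tf (ZMod p) h2 hm (e i) (e j) (e k)
  · intro i j hij k l h1 h3 h4 h5
    exact e.injective (parsons_cf (ZMod p) h2 (e i) (e j) (fun h => hij (e.injective h)) (e k) (e l) h1 h3 h4 h5)
  · intro w hw
    have h := parsons_quad (ZMod p) h2 (fun x => w (e.symm x)) (by rw [e.symm.sum_comp]; exact hw)
    rw [e.symm.sum_comp (fun i => w i ^ 2), ZMod.card] at h
    have h' : ∑ i, ∑ j, w i * w j * (if (G0.comap e).Adj i j then (1 : ℝ) else 0)
        = ∑ x, ∑ y, w (e.symm x) * w (e.symm y) * (if G0.Adj x y then (1 : ℝ) else 0) := by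
      rw [← e.sum_comp]
      refine Finset.sum_congr rfl fun i _ => ?_
      rw [← e.sum_comp]
      refine Finset.sum_congr rfl fun j _ => ?_
      simp
    refine le_trans (le_of_eq (congrArg (· ^ 2) (Eq.trans ?_ h'))) h
    exact Finset.sum_congr rfl fun i _ => Finset.sum_congr rfl fun j _ =>
      congrArg _ (if_congr Iff.rfl rfl rfl)

lemma final_ineq (p n d : ℕ) (hp : 0 < p) (hn : n ≤ p ^ 2) (hd : 2 * d = p + 1) :
    √(p : ℝ) / d * n ≤ 4 * (n : ℝ) ^ ((3 : ℝ) / 4) := by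
  have hd' : 2 * (d : ℝ) = p + 1 := by exact_mod_cast hd
  have hp' : (0 : ℝ) < p := by exact_mod_cast hp
  have hd0 : (0 : ℝ) < d := by linarith
  rcases Nat.eq_zero_or_pos n with rfl | hn0
  · simp
  have hn0' : (0 : ℝ) < n := by exact_mod_cast hn0
  have h1 : (n : ℝ) ^ ((1 : ℝ) / 4) ≤ √(p : ℝ) := by
    have : (n : ℝ) ≤ (p : ℝ) ^ 2 := by exact_mod_cast hn
    calc (n : ℝ) ^ ((1 : ℝ) / 4) ≤ ((p : ℝ) ^ 2) ^ ((1 : ℝ) / 4) := by gcongr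
      _ = (p : ℝ) ^ ((1 : ℝ) / 2) := by
        rw [← Real.rpow_natCast, ← Real.rpow_mul hp'.le]; norm_num
      _ = √(p : ℝ) := by rw [Real.sqrt_eq_rpow]
  have h2 : (n : ℝ) = (n : ℝ) ^ ((1 : ℝ) / 4) * (n : ℝ) ^ ((3 : ℝ) / 4) := by
    rw [← Real.rpow_add hn0']; norm_num
  have h3 : √(p : ℝ) * √(p : ℝ) = p := Real.mul_self_sqrt hp'.le
  have h4 : √(p : ℝ) / d * (n : ℝ) ^ ((1 : ℝ) / 4) ≤ 4 := by
    calc √(p : ℝ) / d * (n : ℝ) ^ ((1 : ℝ) / 4) ≤ √(p : ℝ) / d * √(p : ℝ) := by gcongr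
      _ = p / d := by rw [div_mul_eq_mul_div, h3]
      _ ≤ 4 := by rw [div_le_iff₀ hd0]; linarith
  calc √(p : ℝ) / d * n = (√(p : ℝ) / d * (n : ℝ) ^ ((1 : ℝ) / 4)) * (n : ℝ) ^ ((3 : ℝ) / 4) := by
        rw [mul_assoc, ← h2]
    _ ≤ _ := by gcongr

/-- Every eigenvalue of a regular graph with the quadratic form bound is `d` or small. -/
lemma eig_cases {n : ℕ} (G : SimpleGraph (Fin n)) (d p : ℕ)
    (hG : ∀ i, ∑ j, (if G.Adj i j then (1 : ℝ) else 0) = d)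
    (hQ : ∀ w : Fin n → ℝ, ∑ i, w i = 0 →
        (∑ i, ∑ j, w i * w j * (if G.Adj i j then (1 : ℝ) else 0)) ^ 2 ≤ p * (∑ i, w i ^ 2) ^ 2)
    (v : Fin n → ℝ) (l : ℝ) (hv : ∑ i, v i ^ 2 = 1)
    (hl : ∀ i, ∑ j, (if G.Adj i j then (1 : ℝ) else 0) * v j = l * v i) :
    (l = d ∧ True) ∨ (∑ i, v i = 0 ∧ |l| ≤ √(p : ℝ)) := by
  have h1 : d * ∑ i, v i = l * ∑ i, v i := by
    rw [Finset.mul_sum, Finset.mul_sum, ← Finset.sum_congr rfl (fun i _ => hl i), Finset.sum_comm]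
    refine Finset.sum_congr rfl fun j _ => ?_
    rw [← Finset.sum_mul, ← hG j]
    simp_rw [G.adj_comm]
  by_cases hld : l = d
  · exact Or.inl ⟨hld, trivial⟩
  right
  have h0 : ∑ i, v i = 0 := by
    have : (l - d) * ∑ i, v i = 0 := by linear_combination -h1
    exact (mul_eq_zero.mp this).resolve_left (sub_ne_zero.mpr hld)
  refine ⟨h0, ?_⟩
  have h2 := hQ v h0
  have h3 : ∑ i, ∑ j, v i * v j * (if G.Adj i j then (1 : ℝ) else 0) = l := by
    have : ∀ i, ∑ j, v i * v j * (if G.Adj i j then (1 : ℝ) else 0) = l * v i ^ 2 := by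
      intro i
      rw [show l * v i ^ 2 = v i * (l * v i) by ring, ← hl i, Finset.mul_sum]
      refine Finset.sum_congr rfl fun j _ => by ring
    simp_rw [this]
    rw [← Finset.mul_sum, hv, mul_one]
  rw [h3, hv] at h2
  exact Real.abs_le_sqrt (by linarith)

lemma indep_bound {n : ℕ} (G : SimpleGraph (Fin n)) (d p : ℕ) (hn : 0 < n) (hd : 0 < d)
    (hG : ∀ i, ∑ j, (if G.Adj i j then (1 : ℝ) else 0) = d)
    (hQ : ∀ w : Fin n → ℝ, ∑ i, w i = 0 →
        (∑ i, ∑ j, w i * w j * (if G.Adj i j then (1 : ℝ) else 0)) ^ 2 ≤ p * (∑ i, w i ^ 2) ^ 2)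
    (s : Finset (Fin n)) (hs : ∀ i ∈ s, ∀ j ∈ s, ¬ G.Adj i j) :
    (s.card : ℝ) ≤ √(p : ℝ) / d * n := by
  have hn' : (0 : ℝ) < n := by exact_mod_cast hn
  have hd' : (0 : ℝ) < d := by exact_mod_cast hd
  rcases s.eq_empty_or_nonempty with rfl | hne
  · simp; positivity
  have hc : (0 : ℝ) < s.card := by exact_mod_cast hne.card_pos
  set c : ℝ := (s.card : ℝ) with hcdef
  let χ : Fin n → ℝ := fun i => if i ∈ s then 1 else 0
  have hχ : ∑ i, χ i = c := by simp [χ, hcdef]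
  have hχ2 : ∑ i, χ i ^ 2 = c := by simp [χ, hcdef]
  have hχA : ∑ i, ∑ j, χ i * χ j * (if G.Adj i j then (1 : ℝ) else 0) = 0 := by
    refine Finset.sum_eq_zero fun i _ => Finset.sum_eq_zero fun j _ => ?_
    by_cases hi : i ∈ s
    · by_cases hj : j ∈ s
      · simp [hs i hi j hj]
      · simp [χ, hj]
    · simp [χ, hi]
  have hG' : ∀ j, ∑ i, (if G.Adj i j then (1 : ℝ) else 0) = d := by
    intro j; rw [← hG j]; simp_rw [G.adj_comm]
  set m : ℝ := c / n with hm
  have hmn : m * n = c := by rw [hm]; field_simp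
  have hw0 : ∑ i, (χ i - m) = 0 := by
    rw [Finset.sum_sub_distrib, hχ]; simp; linarith
  have h := hQ (fun i => χ i - m) hw0
  have e1 : ∑ i, (χ i - m) ^ 2 = c - m * c := by
    have : ∀ i, (χ i - m) ^ 2 = χ i ^ 2 - 2 * m * χ i + m ^ 2 := fun i => by ring
    simp_rw [this, Finset.sum_add_distrib, Finset.sum_sub_distrib, ← Finset.mul_sum, hχ, hχ2]
    simp
    linear_combination m * hmn
  have e2 : ∑ i, ∑ j, (χ i - m) * (χ j - m) * (if G.Adj i j then (1 : ℝ) else 0) = - (m * d * c) := by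
    have : ∀ i j, (χ i - m) * (χ j - m) * (if G.Adj i j then (1 : ℝ) else 0)
      = χ i * χ j * (if G.Adj i j then (1 : ℝ) else 0) - m * (χ i * (if G.Adj i j then (1 : ℝ) else 0))
        - m * (χ j * (if G.Adj i j then (1 : ℝ) else 0)) + m ^ 2 * (if G.Adj i j then (1 : ℝ) else 0) :=
      fun i j => by ring
    simp_rw [this, Finset.sum_add_distrib, Finset.sum_sub_distrib]
    rw [hχA, Finset.sum_comm (f := fun i j => m * (χ j * (if G.Adj i j then (1 : ℝ) else 0)))]
    simp_rw [← Finset.mul_sum, hG, hG', ← Finset.sum_mul, hχ]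
    simp
    linear_combination m * d * hmn
  rw [e1, e2] at h
  have hmc : 0 < m := by positivity
  have hm1 : 0 ≤ c - m * c := by rw [← e1]; exact Finset.sum_nonneg fun _ _ => sq_nonneg _
  have h3 : m * d * c ≤ √(p : ℝ) * (c - m * c) := by
    rw [neg_sq, ← Real.sq_sqrt (Nat.cast_nonneg p), ← mul_pow] at h
    exact le_of_sq_le_sq h (by positivity)
  have h4 : m * d * c ≤ √(p : ℝ) * c := by
    refine h3.trans ?_
    gcongr
    have : 0 ≤ m * c := by positivity
    linarith
  have h5 : m * d ≤ √(p : ℝ) := le_of_mul_le_mul_right h4 hc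
  rw [← hmn]
  gcongr
  rw [le_div_iff₀ hd']
  exact h5

lemma spectral_part {n : ℕ} (G : SimpleGraph (Fin n)) (d p : ℕ) (hn : 0 < n) (hp : 0 < p) (hd : 2 * d = p + 1)
    (hG : ∀ i, ∑ j, (if G.Adj i j then (1 : ℝ) else 0) = d)
    (hQ : ∀ w : Fin n → ℝ, ∑ i, w i = 0 →
        (∑ i, ∑ j, w i * w j * (if G.Adj i j then (1 : ℝ) else 0)) ^ 2 ≤ p * (∑ i, w i ^ 2) ^ 2) :
    ∃ (hA : (G.adjMatrix ℝ).IsHermitian) (lmin lmax : ℝ),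
          (∀ i, lmin ≤ hA.eigenvalues i) ∧ (∃ i, hA.eigenvalues i = lmin) ∧
          (∀ i, hA.eigenvalues i ≤ lmax) ∧ (∃ i, hA.eigenvalues i = lmax) ∧
          lmin < lmax ∧
          |lmin / (lmax - lmin)| * n ≤ √(p : ℝ) / d * n := by
  have hA : (G.adjMatrix ℝ).IsHermitian := by
    unfold Matrix.IsHermitian
    rw [Matrix.conjTranspose_eq_transpose_of_trivial, SimpleGraph.transpose_adjMatrix]
  have hd' : 2 * (d : ℝ) = p + 1 := by exact_mod_cast hd
  have hp' : (0 : ℝ) < p := by exact_mod_cast hp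
  have hd0 : (0 : ℝ) < d := by linarith
  have hsq : √(p : ℝ) ≤ d := by
    have := Real.sq_sqrt hp'.le
    nlinarith [sq_nonneg (√(p : ℝ) - 1)]
  have hne : (Finset.univ : Finset (Fin n)).Nonempty := ⟨⟨0, hn⟩, Finset.mem_univ _⟩
  have hnorm : ∀ i, ∑ k, (hA.eigenvectorBasis i k) ^ 2 = 1 := by
    intro i
    have h := hA.eigenvectorBasis.orthonormal.1 i
    have h2 := EuclideanSpace.norm_sq_eq (hA.eigenvectorBasis i)
    rw [h] at h2
    simpa using h2.symm
  have hmul : ∀ i k, ∑ j, (if G.Adj k j then (1 : ℝ) else 0) * hA.eigenvectorBasis i j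
      = hA.eigenvalues i * hA.eigenvectorBasis i k := by
    intro i k
    have h := congrFun (hA.mulVec_eigenvectorBasis i) k
    simpa [Matrix.mulVec, dotProduct, SimpleGraph.adjMatrix_apply] using h
  have hcase : ∀ i, hA.eigenvalues i = d ∨ (∑ k, hA.eigenvectorBasis i k = 0 ∧ |hA.eigenvalues i| ≤ √(p : ℝ)) := by
    intro i
    rcases eig_cases G d p hG hQ (fun k => hA.eigenvectorBasis i k) (hA.eigenvalues i) (hnorm i) (hmul i) with h | h
    · exact Or.inl h.1
    · exact Or.inr h
  have hmax : ∃ i, hA.eigenvalues i = d := by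
    by_contra hcon
    push Not at hcon
    have hz : ∀ i, ∑ k, hA.eigenvectorBasis i k = 0 := fun i => ((hcase i).resolve_left (hcon i)).1
    let x : EuclideanSpace ℝ (Fin n) := WithLp.toLp 2 (fun _ => (1 : ℝ))
    have hx : x = 0 := by
      rw [← hA.eigenvectorBasis.sum_repr x]
      refine Finset.sum_eq_zero fun i _ => ?_
      have : hA.eigenvectorBasis.repr x i = 0 := by
        rw [OrthonormalBasis.repr_apply_apply, PiLp.inner_apply]
        simpa [x] using hz i
      rw [this, zero_smul]
    have := congrArg (fun y : EuclideanSpace ℝ (Fin n) => y ⟨0, hn⟩) hx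
    simp [x] at this
  obtain ⟨m, -, hm⟩ := Finset.exists_min_image _ hA.eigenvalues hne
  obtain ⟨M, hM⟩ := hmax
  have htr : ∑ i, hA.eigenvalues i = 0 := by
    have h := hA.trace_eq_sum_eigenvalues
    rw [SimpleGraph.trace_adjMatrix] at h
    exact_mod_cast h.symm
  have hneg : hA.eigenvalues m < 0 := by
    by_contra hcon
    push Not at hcon
    have : 0 < ∑ i, hA.eigenvalues i :=
      Finset.sum_pos' (fun i hi => hcon.trans (hm i hi)) ⟨M, Finset.mem_univ _, hM ▸ hd0⟩
    linarith
  have habs : |hA.eigenvalues m| ≤ √(p : ℝ) := by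
    rcases hcase m with h | h
    · linarith
    · exact h.2
  refine ⟨hA, hA.eigenvalues m, d, fun i => hm i (Finset.mem_univ _), ⟨m, rfl⟩, fun i => ?_, ⟨M, hM⟩, by linarith, ?_⟩
  · rcases hcase i with h | h
    · exact h.le
    · exact (le_abs_self _).trans (h.2.trans hsq)
  · gcongr
    rw [abs_div, abs_of_pos (show 0 < (d : ℝ) - hA.eigenvalues m by linarith)]
    gcongr
    linarith

/-- For infinitely many `n` there is an `n`-vertex regular graph `G` whose adjacency matrix
has minimum and maximum eigenvalues `lmin < lmax` with `|lmin/(lmax - lmin)| * n ≤ 4 n^{3/4}`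
(in particular `α(G) ≤ 4 n^{3/4}`), while every Hermitian weighted adjacency matrix of `G` has
at least `n/4` non-negative eigenvalues. -/
theorem inertia_bound_far_from_ratio_bound :
    {n : ℕ | 0 < n ∧
      ∃ G : SimpleGraph (Fin n),
        (∃ d : ℕ, G.IsRegularOfDegree d) ∧
        (∃ (hA : (G.adjMatrix ℝ).IsHermitian) (lmin lmax : ℝ),
          (∀ i, lmin ≤ hA.eigenvalues i) ∧ (∃ i, hA.eigenvalues i = lmin) ∧
          (∀ i, hA.eigenvalues i ≤ lmax) ∧ (∃ i, hA.eigenvalues i = lmax) ∧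
          lmin < lmax ∧
          |lmin / (lmax - lmin)| * n ≤ 4 * (n : ℝ) ^ ((3 : ℝ) / 4)) ∧
        (∀ s : Finset (Fin n), (∀ i ∈ s, ∀ j ∈ s, ¬ G.Adj i j) →
          (s.card : ℝ) ≤ 4 * (n : ℝ) ^ ((3 : ℝ) / 4)) ∧
        (∀ (A : Matrix (Fin n) (Fin n) ℂ) (hA : A.IsHermitian),
          (∀ i j, ¬ G.Adj i j → A i j = 0) →
          (n : ℝ) / 4 ≤ (Fintype.card {i : Fin n // 0 ≤ hA.eigenvalues i} : ℝ))}.Infinite := by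
  rw [Set.infinite_iff_exists_gt]
  intro N
  obtain ⟨p, hp, hpN, hp4⟩ := Nat.exists_prime_gt_modEq_one (k := 4) N (by norm_num)
  have hp4' : p % 4 = 1 := hp4
  obtain ⟨n, G, d, hpn, hnp, hd, hG, tf, cf, hQ⟩ := exists_graph p hp hp4'
  have hp0 := hp.pos
  have hn0 : 0 < n := by omega
  have hd0 : 0 < d := by omega
  have hfin := final_ineq p n d hp0 hnp hd
  refine ⟨n, ⟨hn0, G, ⟨d, fun i => ?_⟩, ?_, fun s hs => ?_, fun A hA h0 => ?_⟩, by omega⟩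
  · have h := hG i
    rw [Finset.sum_boole] at h
    have h' : (Finset.univ.filter fun j => G.Adj i j).card = d := by exact_mod_cast h
    rw [← h', ← SimpleGraph.card_neighborFinset_eq_degree]
    congr 1
    ext j
    simp
  · obtain ⟨hA, l1, l2, h1, h2, h3, h4, h5, h6⟩ := spectral_part G d p hn0 hp0 hd hG hQ
    exact ⟨hA, l1, l2, h1, h2, h3, h4, h5, h6.trans hfin⟩
  · exact (indep_bound G d p hn0 hd0 hG hQ s hs).trans hfin
  · have h := inertia_girth_five G d hd0 hG tf cf A hA h0
    rw [Fintype.card_fin] at h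
    have h' : (n : ℝ) ≤ 4 * (Fintype.card {i : Fin n // 0 ≤ hA.eigenvalues i} : ℝ) := by exact_mod_cast h
    linarith
end

section
/- Let G be a finite simple graph on n vertices that is C4-free, and let A be any Hermitian weighted adjacency matrix of G. Then n_{≥0}(A) ≥ β n, where β = √3 − 3/2. -/
open Matrix Finset

/-- A graph is `C4`-free if it has no cycle of length 4 as a (not necessarily induced)
subgraph: there are no four pairwise distinct vertices `a, b, c, d` with
`ab`, `bc`, `cd`, `da` all edges. -/
def C4Free {V : Type*} (G : SimpleGraph V) : Prop :=
  ∀ a b c d : V, a ≠ b → a ≠ c → a ≠ d → b ≠ c → b ≠ d → c ≠ d →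
    G.Adj a b → G.Adj b c → G.Adj c d → ¬ G.Adj d a

lemma poly_bound (x : ℝ) :
    2 * x + 3 * x ^ 2 - x ^ 4 ≤ if 0 ≤ x then 9 / 4 + 3 * Real.sqrt 3 / 2 else 0 := by
  split_ifs with h
  · have h3 : Real.sqrt 3 ^ 2 = 3 := Real.sq_sqrt (by norm_num)
    have hs : 1 ≤ Real.sqrt 3 := Real.one_le_sqrt.2 (by norm_num)
    obtain ⟨t, ht⟩ : ∃ t, t = (1 + Real.sqrt 3) / 2 := ⟨_, rfl⟩
    have hs' : Real.sqrt 3 = 2 * t - 1 := by linarith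
    have ht2 : t ^ 2 = t + 1 / 2 := by rw [hs'] at h3; nlinarith
    have ht1 : 1 ≤ t := by linarith
    rw [hs']
    have key : 9 / 4 + 3 * (2 * t - 1) / 2 - (2 * x + 3 * x ^ 2 - x ^ 4)
        = (x - t) ^ 2 * (x ^ 2 + 2 * t * x + (3 * t - 3 / 2)) := by
      linear_combination (3 * x ^ 2 + (4 - 2 * t) * x - 3 * t - 3 / 2) * ht2
    have : 0 ≤ (x - t) ^ 2 * (x ^ 2 + 2 * t * x + (3 * t - 3 / 2)) := by
      apply mul_nonneg (sq_nonneg _)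
      have : 0 ≤ t * x := by positivity
      nlinarith [sq_nonneg x]
    linarith
  · push Not at h
    have : 2 * x + 3 * x ^ 2 - x ^ 4 = - ((-x) * (2 - x) * (x + 1) ^ 2 * (-1) * (-1)) := by ring
    rw [this]
    have : 0 ≤ (-x) * (2 - x) * (x + 1) ^ 2 :=
      mul_nonneg (mul_nonneg (by linarith) (by linarith)) (sq_nonneg _)
    linarith

section
variable {V : Type} [Fintype V] [DecidableEq V]

/-- number of nonnegative eigenvalues -/
noncomputable def cnt {A : Matrix V V ℂ} (hA : A.IsHermitian) : ℕ :=
  Fintype.card {i : V // 0 ≤ hA.eigenvalues i}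

/-- real quadratic form -/
noncomputable def qf (A : Matrix V V ℂ) (x : V → ℂ) : ℝ := (star x ⬝ᵥ A *ᵥ x).re

lemma spec_form {A : Matrix V V ℂ} (hA : A.IsHermitian) :
    A = (hA.eigenvectorUnitary : Matrix V V ℂ) * diagonal (fun i => (hA.eigenvalues i : ℂ))
      * (hA.eigenvectorUnitary : Matrix V V ℂ)ᴴ := by
  have := hA.spectral_theorem
  rw [Unitary.conjStarAlgAut_apply] at this
  exact this

lemma qf_eq {A : Matrix V V ℂ} (hA : A.IsHermitian) (x : V → ℂ) :
    qf A x = ∑ i, hA.eigenvalues i *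
      Complex.normSq (((hA.eigenvectorUnitary : Matrix V V ℂ)ᴴ *ᵥ x) i) := by
  unfold qf
  conv_lhs => rw [spec_form hA]
  set U := (hA.eigenvectorUnitary : Matrix V V ℂ)
  have : star x ⬝ᵥ (U * diagonal (fun i => (hA.eigenvalues i : ℂ)) * Uᴴ) *ᵥ x
      = star (Uᴴ *ᵥ x) ⬝ᵥ (diagonal (fun i => (hA.eigenvalues i : ℂ)) *ᵥ (Uᴴ *ᵥ x)) := by
    rw [star_mulVec, conjTranspose_conjTranspose, dotProduct_mulVec, dotProduct_mulVec,
      dotProduct_mulVec, vecMul_vecMul, vecMul_vecMul, Matrix.mul_assoc]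
  rw [this]
  simp only [dotProduct, mulVec_diagonal, Pi.star_apply, Complex.re_sum]
  refine Finset.sum_congr rfl fun i _ => ?_
  simp [Complex.normSq_apply]
  ring

lemma U_mul {A : Matrix V V ℂ} (hA : A.IsHermitian) :
    (hA.eigenvectorUnitary : Matrix V V ℂ) * (hA.eigenvectorUnitary : Matrix V V ℂ)ᴴ = 1 :=
  Unitary.mul_star_self_of_mem hA.eigenvectorUnitary.2

lemma U_mul' {A : Matrix V V ℂ} (hA : A.IsHermitian) :
    (hA.eigenvectorUnitary : Matrix V V ℂ)ᴴ * (hA.eigenvectorUnitary : Matrix V V ℂ) = 1 :=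
  Unitary.star_mul_self_of_mem hA.eigenvectorUnitary.2

lemma card_le_cnt {A : Matrix V V ℂ} (hA : A.IsHermitian) {ι : Type} [Fintype ι]
    (Φ : (ι → ℂ) →ₗ[ℂ] (V → ℂ)) (hΦ : Function.Injective Φ) (h : ∀ z, 0 ≤ qf A (Φ z)) :
    Fintype.card ι ≤ cnt hA := by
  set U := (hA.eigenvectorUnitary : Matrix V V ℂ) with hU
  let Ψ : (ι → ℂ) →ₗ[ℂ] ({i : V // 0 ≤ hA.eigenvalues i} → ℂ) :=
    (LinearMap.funLeft ℂ ℂ Subtype.val) ∘ₗ (Uᴴ).mulVecLin ∘ₗ Φ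
  have hinj : Function.Injective Ψ := by
    rw [injective_iff_map_eq_zero]
    intro z hz
    have hz' : ∀ i, 0 ≤ hA.eigenvalues i → (Uᴴ *ᵥ Φ z) i = 0 := fun i hi =>
      congrFun hz ⟨i, hi⟩
    have h1 := h z
    rw [qf_eq hA] at h1
    have h2 : ∀ i ∈ univ, hA.eigenvalues i * Complex.normSq ((Uᴴ *ᵥ Φ z) i) ≤ 0 := by
      intro i _
      by_cases hi : 0 ≤ hA.eigenvalues i
      · rw [hz' i hi]; simp
      · exact mul_nonpos_of_nonpos_of_nonneg (not_le.1 hi).le (Complex.normSq_nonneg _)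
    have h3 := (Finset.sum_eq_zero_iff_of_nonpos h2).1
      (le_antisymm (Finset.sum_nonpos h2) h1)
    have h4 : Uᴴ *ᵥ Φ z = 0 := by
      ext i
      by_cases hi : 0 ≤ hA.eigenvalues i
      · exact hz' i hi
      · rcases mul_eq_zero.1 (h3 i (mem_univ i)) with h5 | h5
        · exact absurd h5.ge hi
        · simpa using h5
    have h5 : Φ z = 0 := by
      have : U *ᵥ (Uᴴ *ᵥ Φ z) = Φ z := by
        rw [mulVec_mulVec, U_mul hA, one_mulVec]
      rw [← this, h4, mulVec_zero]
    exact hΦ (by rw [h5, map_zero])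
  have := LinearMap.finrank_le_finrank_of_injective hinj
  simpa [cnt] using this

lemma exists_cnt {A : Matrix V V ℂ} (hA : A.IsHermitian) :
    ∃ Φ : ({i : V // 0 ≤ hA.eigenvalues i} → ℂ) →ₗ[ℂ] (V → ℂ),
      Function.Injective Φ ∧ ∀ z, 0 ≤ qf A (Φ z) := by
  set U := (hA.eigenvectorUnitary : Matrix V V ℂ) with hU
  let E : ({i : V // 0 ≤ hA.eigenvalues i} → ℂ) →ₗ[ℂ] (V → ℂ) :=
    { toFun := fun z i => if h : 0 ≤ hA.eigenvalues i then z ⟨i, h⟩ else 0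
      map_add' := by intro x y; ext i; by_cases h : 0 ≤ hA.eigenvalues i <;> simp [h]
      map_smul' := by intro c y; ext i; by_cases h : 0 ≤ hA.eigenvalues i <;> simp [h] }
  have hUE : ∀ z, Uᴴ *ᵥ (U *ᵥ E z) = E z := fun z => by
    rw [mulVec_mulVec, U_mul' hA, one_mulVec]
  refine ⟨U.mulVecLin ∘ₗ E, ?_, ?_⟩
  · rw [injective_iff_map_eq_zero]
    intro z hz
    have h1 : U *ᵥ E z = 0 := hz
    have h2 := hUE z
    rw [h1, mulVec_zero] at h2
    ext i
    have := congrFun h2 i.1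
    simpa [E, i.2] using this.symm
  · intro z
    rw [qf_eq hA]
    refine Finset.sum_nonneg fun i _ => ?_
    have : (Uᴴ *ᵥ ((U.mulVecLin ∘ₗ E) z)) i = E z i := congrFun (hUE z) i
    rw [this]
    by_cases h : 0 ≤ hA.eigenvalues i
    · exact mul_nonneg h (Complex.normSq_nonneg _)
    · simp [E, h]

lemma trace_pow_eq {A : Matrix V V ℂ} (hA : A.IsHermitian) (k : ℕ) :
    ((A ^ k).trace).re = ∑ i, hA.eigenvalues i ^ k := by
  have h : A ^ k = (hA.eigenvectorUnitary : Matrix V V ℂ) *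
      (diagonal (fun i => (hA.eigenvalues i : ℂ))) ^ k
      * (hA.eigenvectorUnitary : Matrix V V ℂ)ᴴ := by
    have := hA.spectral_theorem
    conv_lhs => rw [this]
    rw [← map_pow, Unitary.conjStarAlgAut_apply]
    rfl
  rw [h, Matrix.mul_assoc, trace_mul_comm, Matrix.mul_assoc, U_mul' hA, Matrix.mul_one,
    diagonal_pow, trace_diagonal, Complex.re_sum]
  refine Finset.sum_congr rfl fun i _ => ?_
  rw [Pi.pow_apply, ← Complex.ofReal_pow, Complex.ofReal_re]

/-- At most one common neighbour. -/
def Cod (A : Matrix V V ℂ) : Prop :=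
  ∀ i j k l, i ≠ j → A i k ≠ 0 → A k j ≠ 0 → A i l ≠ 0 → A l j ≠ 0 → k = l

/-- squared row norm -/
noncomputable def rn (A : Matrix V V ℂ) (i : V) : ℝ := ∑ j, Complex.normSq (A i j)

lemma normSq_symm {A : Matrix V V ℂ} (hA : A.IsHermitian) (i j : V) :
    Complex.normSq (A i j) = Complex.normSq (A j i) := by
  rw [← hA.apply i j]; simp

lemma tr_sq {A : Matrix V V ℂ} (hA : A.IsHermitian) :
    ((A * A).trace).re = ∑ i, rn A i := by
  simp only [trace, Matrix.diag, Complex.re_sum, Matrix.mul_apply, rn]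
  refine Finset.sum_congr rfl fun i _ => Finset.sum_congr rfl fun j _ => ?_
  rw [← hA.apply j i]
  simp [Complex.normSq_apply]

lemma tr4 {A : Matrix V V ℂ} (hA : A.IsHermitian) (hc : Cod A) :
    ((A ^ 4).trace).re ≤ 2 * ∑ i, rn A i ^ 2 := by
  have h2 : (A * A).IsHermitian := by
    unfold IsHermitian; rw [conjTranspose_mul, hA.eq]
  have : A ^ 4 = (A * A) * (A * A) := by simp [pow_succ, Matrix.mul_assoc]
  rw [this, tr_sq h2]
  have hd : ∀ i j, Complex.normSq ((A * A) i j) ≤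
      (if i = j then rn A i ^ 2 else 0) + ∑ k, Complex.normSq (A i k) * Complex.normSq (A k j) := by
    intro i j
    have hpos : 0 ≤ ∑ k, Complex.normSq (A i k) * Complex.normSq (A k j) :=
      Finset.sum_nonneg fun k _ => mul_nonneg (Complex.normSq_nonneg _) (Complex.normSq_nonneg _)
    rw [Matrix.mul_apply]
    split_ifs with h
    · subst h
      have : ∑ k, A i k * A k i = ((rn A i : ℝ) : ℂ) := by
        rw [rn, Complex.ofReal_sum]
        refine Finset.sum_congr rfl fun k _ => ?_
        rw [← hA.apply k i, Complex.normSq_eq_conj_mul_self, mul_comm]; rfl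
      rw [this, Complex.normSq_ofReal, ← sq]
      linarith
    · rw [zero_add]
      by_cases hk : ∃ k, A i k ≠ 0 ∧ A k j ≠ 0
      · obtain ⟨k, hk1, hk2⟩ := hk
        have : ∀ l, l ≠ k → A i l * A l j = 0 := by
          intro l hl
          by_contra hne
          exact hl (hc i j l k h (left_ne_zero_of_mul hne) (right_ne_zero_of_mul hne) hk1 hk2)
        rw [Finset.sum_eq_single k (fun l _ hl => this l hl) (by simp), Complex.normSq_mul]
        exact Finset.single_le_sum (f := fun k => Complex.normSq (A i k) * Complex.normSq (A k j))
          (fun k _ => mul_nonneg (Complex.normSq_nonneg _) (Complex.normSq_nonneg _)) (mem_univ k)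
      · push Not at hk
        rw [Finset.sum_eq_zero]
        · simpa using hpos
        · intro k _
          by_cases h0 : A i k = 0
          · simp [h0]
          · simp [hk k h0]
  calc ∑ i, rn (A * A) i ≤ ∑ i, ∑ j, ((if i = j then rn A i ^ 2 else 0) +
        ∑ k, Complex.normSq (A i k) * Complex.normSq (A k j)) :=
        Finset.sum_le_sum fun i _ => Finset.sum_le_sum fun j _ => hd i j
    _ = ∑ i, rn A i ^ 2 + ∑ k, rn A k ^ 2 := by
        simp only [Finset.sum_add_distrib]
        congr 1
        · simp
        · calc _ = ∑ i, ∑ k, ∑ j, Complex.normSq (A i k) * Complex.normSq (A k j) :=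
                Finset.sum_congr rfl fun i _ => Finset.sum_comm
            _ = ∑ k, ∑ i, ∑ j, Complex.normSq (A i k) * Complex.normSq (A k j) := Finset.sum_comm
            _ = _ := by
              refine Finset.sum_congr rfl fun k _ => ?_
              simp only [← Finset.mul_sum]
              rw [← Finset.sum_mul, sq, rn]
              congr 1
              exact Finset.sum_congr rfl fun i _ => normSq_symm hA i k
    _ = _ := by ring

lemma cnt_lower {B : Matrix V V ℂ} (hB : B.IsHermitian) (hd : ∀ i, B i i = 0) (hc : Cod B) :
    3 * ∑ i, rn B i - 2 * ∑ i, rn B i ^ 2 ≤ (9 / 4 + 3 * Real.sqrt 3 / 2) * cnt hB := by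
  have h1 : ∑ i, hB.eigenvalues i = 0 := by
    have := trace_pow_eq hB 1
    simp only [pow_one] at this
    rw [← this]
    simp [trace, hd]
  have h2 : ∑ i, hB.eigenvalues i ^ 2 = ∑ i, rn B i := by
    rw [← trace_pow_eq hB 2, sq, tr_sq hB]
  have h4 : ∑ i, hB.eigenvalues i ^ 4 ≤ 2 * ∑ i, rn B i ^ 2 := by
    rw [← trace_pow_eq hB 4]; exact tr4 hB hc
  have h := Finset.sum_le_sum fun i (_ : i ∈ univ) => poly_bound (hB.eigenvalues i)
  rw [Finset.sum_sub_distrib, Finset.sum_add_distrib, ← Finset.mul_sum, ← Finset.mul_sum, h1, h2,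
    ← Finset.sum_filter, Finset.sum_const, nsmul_eq_mul] at h
  have hcard : (univ.filter fun i => 0 ≤ hB.eigenvalues i).card = cnt hB :=
    (Fintype.card_subtype _).symm
  rw [hcard] at h
  linarith

lemma cnt_scale {A B : Matrix V V ℂ} (hA : A.IsHermitian) (hB : B.IsHermitian) (d : V → ℝ)
    (hd : ∀ i, d i ≠ 0) (h : ∀ i j, B i j = d i * A i j * d j) : cnt hB ≤ cnt hA := by
  obtain ⟨Φ, hΦ, hp⟩ := exists_cnt hB
  refine card_le_cnt hA ((diagonal (fun i => (d i : ℂ))).mulVecLin ∘ₗ Φ) ?_ ?_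
  · refine Function.Injective.comp (g := (diagonal (fun i => (d i : ℂ))).mulVecLin) ?_ hΦ
    intro x y hxy
    ext i
    have := congrFun hxy i
    simpa [mulVec_diagonal, hd i] using this
  · intro z
    convert hp z using 1
    have hD : ∀ i, ((diagonal (fun i => (d i : ℂ))).mulVecLin ∘ₗ Φ) z i = d i * Φ z i := fun i => by
      simp [mulVec_diagonal]
    unfold qf
    congr 1
    simp only [dotProduct, mulVec, h, Finset.mul_sum, Pi.star_apply, hD]
    refine Finset.sum_congr rfl fun i _ => Finset.sum_congr rfl fun j _ => ?_
    simp
    ring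
end

section
variable {V : Type} [Fintype V] [DecidableEq V]

lemma scaling (S : V → V → ℝ) (hS0 : ∀ i j, 0 ≤ S i j) (hsym : ∀ i j, S i j = S j i)
    (σ : V → V) (hσ : Function.Injective σ) (hσS : ∀ i, 0 < S i (σ i)) :
    ∃ C : ℝ, ∀ ε : ℝ, 0 < ε → ∃ y : V → ℝ,
      ∑ i, (∑ j, S i j * Real.exp (y i + y j) - 3 / 4) ^ 2 ≤ ε * C := by
  classical
  let F : (V → ℝ) → ℝ := fun y =>
    1 / 2 * ∑ i, ∑ j, S i j * Real.exp (y i + y j) - 3 / 4 * ∑ i, y i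
  let K : ℝ := 3 / 8 * ∑ i, (Real.log (4 / 3 * S i (σ i)) + 1)
  have hF : ∀ y, K ≤ F y := by
    intro y
    have h1 : ∀ i, 3 / 8 * (y i + y (σ i)) + 3 / 8 * (Real.log (4 / 3 * S i (σ i)) + 1)
        ≤ 1 / 2 * ∑ j, S i j * Real.exp (y i + y j) := by
      intro i
      have h2 : S i (σ i) * Real.exp (y i + y (σ i)) ≤ ∑ j, S i j * Real.exp (y i + y j) :=
        Finset.single_le_sum (f := fun j => S i j * Real.exp (y i + y j))
          (fun j _ => mul_nonneg (hS0 i j) (Real.exp_pos _).le) (mem_univ (σ i))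
      have h3 := Real.add_one_le_exp (y i + y (σ i) + Real.log (4 / 3 * S i (σ i)))
      rw [Real.exp_add, Real.exp_log (by have := hσS i; positivity)] at h3
      nlinarith
    have h2 := Finset.sum_le_sum fun i (_ : i ∈ univ) => h1 i
    have h3 : ∑ i, y (σ i) = ∑ i, y i :=
      Equiv.sum_comp (Equiv.ofBijective σ (Finite.injective_iff_bijective.1 hσ)) y
    rw [Finset.sum_add_distrib, ← Finset.mul_sum, ← Finset.mul_sum, ← Finset.mul_sum,
      Finset.sum_add_distrib, h3] at h2
    simp only [F, K]
    linarith
  refine ⟨2 * (F 0 - K), fun ε hε => ?_⟩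
  let H : (V → ℝ) → ℝ := fun y => F y + ε / 2 * ∑ i, y i ^ 2
  have hcont : Continuous H := by
    simp only [H, F]
    fun_prop
  obtain ⟨y, hy⟩ : ∃ y, ∀ z, H y ≤ H z := by
    apply hcont.exists_forall_le' 0
    have h1 := (tendsto_norm_cocompact_atTop (E := V → ℝ)).eventually
      (Filter.eventually_ge_atTop (Real.sqrt (2 * (F 0 - K) / ε)))
    filter_upwards [h1] with z hz
    have hz2 : 2 * (F 0 - K) / ε ≤ ‖z‖ ^ 2 := (Real.sqrt_le_left (norm_nonneg z)).1 hz
    have hz3 : ‖z‖ ^ 2 ≤ ∑ i, z i ^ 2 := by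
      have h0 : 0 ≤ ∑ i, z i ^ 2 := Finset.sum_nonneg fun i _ => sq_nonneg _
      rw [← Real.le_sqrt (norm_nonneg z) h0]
      refine (pi_norm_le_iff_of_nonneg (Real.sqrt_nonneg _)).2 fun i => ?_
      rw [Real.norm_eq_abs]
      exact Real.abs_le_sqrt (Finset.single_le_sum (f := fun i => z i ^ 2)
        (fun i _ => sq_nonneg _) (mem_univ i))
    have hz4 : 2 * (F 0 - K) / ε ≤ ∑ i, z i ^ 2 := hz2.trans hz3
    rw [div_le_iff₀ hε] at hz4
    have := hF z
    have h00 : H 0 = F 0 := by simp [H]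
    rw [h00]
    simp only [H]
    linarith
  refine ⟨y, ?_⟩
  have hcrit : ∀ v : V → ℝ, 1 / 2 * ∑ i, ∑ j, S i j * (Real.exp (y i + y j) * (v i + v j))
      - 3 / 4 * ∑ i, v i + ε / 2 * ∑ i, 2 * y i * v i = 0 := by
    intro v
    have hmin : IsLocalMin (fun t : ℝ => H (fun i => y i + t * v i)) 0 := by
      refine Filter.Eventually.of_forall fun t => ?_
      simp only [zero_mul, add_zero]
      exact hy _
    refine hmin.hasDerivAt_eq_zero ?_
    have hl : ∀ i, HasDerivAt (fun t : ℝ => y i + t * v i) (v i) 0 := fun i => by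
      simpa using ((hasDerivAt_id (0 : ℝ)).mul_const (v i)).const_add (y i)
    simp only [H, F]
    refine HasDerivAt.add (HasDerivAt.sub (HasDerivAt.const_mul _ ?_) (HasDerivAt.const_mul _ ?_))
      (HasDerivAt.const_mul _ ?_)
    · refine HasDerivAt.fun_sum fun i _ => HasDerivAt.fun_sum fun j _ => HasDerivAt.const_mul _ ?_
      simpa using ((hl i).add (hl j)).exp
    · exact HasDerivAt.fun_sum fun i _ => hl i
    · refine HasDerivAt.fun_sum fun i _ => ?_
      have := (hl i).pow 2
      simp only [zero_mul, add_zero, Nat.cast_ofNat, Nat.add_one_sub_one, pow_one] at this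
      exact this
  have hr : ∀ i, ∑ j, S i j * Real.exp (y i + y j) - 3 / 4 = - (ε * y i) := by
    intro k
    have h := hcrit (Pi.single k 1)
    have e1 : ∑ i, ∑ j, S i j * (Real.exp (y i + y j) *
        ((Pi.single k 1 : V → ℝ) i + (Pi.single k 1 : V → ℝ) j))
        = 2 * ∑ j, S k j * Real.exp (y k + y j) := by
      simp only [mul_add, Finset.sum_add_distrib, two_mul]
      congr 1
      · rw [Finset.sum_eq_single k]
        · simp
        · intro b _ hb; simp [hb]
        · simp
      · refine Finset.sum_congr rfl fun j _ => ?_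
        rw [Finset.sum_eq_single k]
        · simp [hsym j k, add_comm (y j)]
        · intro b _ hb; simp [hb]
        · simp
    rw [e1] at h
    simp [Pi.single_apply] at h
    linarith
  simp only [hr]
  have h1 : H y ≤ H 0 := hy 0
  have h2 := hF y
  have h00 : H 0 = F 0 := by simp [H]
  rw [h00] at h1
  simp only [H] at h1
  have h3 : ε / 2 * ∑ i, y i ^ 2 ≤ F 0 - K := by linarith
  have h4 : ∑ i, (-(ε * y i)) ^ 2 = ε * (ε * ∑ i, y i ^ 2) := by
    rw [Finset.mul_sum, Finset.mul_sum]
    exact Finset.sum_congr rfl fun i _ => by ring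
  rw [h4]
  exact mul_le_mul_of_nonneg_left (by linarith) hε.le

lemma beta_K : (Real.sqrt 3 - 3 / 2) * (9 / 4 + 3 * Real.sqrt 3 / 2) = 9 / 8 := by
  have h3 : Real.sqrt 3 ^ 2 = 3 := Real.sq_sqrt (by norm_num)
  nlinarith

lemma beta_half : Real.sqrt 3 - 3 / 2 ≤ 1 / 2 := by
  have : Real.sqrt 3 ≤ 2 := Real.sqrt_le_iff.2 (by norm_num)
  linarith

lemma hall_case {A : Matrix V V ℂ} (hA : A.IsHermitian) (hd : ∀ i, A i i = 0) (hc : Cod A)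
    (σ : V → V) (hσ : Function.Injective σ) (hσS : ∀ i, A i (σ i) ≠ 0) :
    (Real.sqrt 3 - 3 / 2) * Fintype.card V ≤ cnt hA := by
  set K : ℝ := 9 / 4 + 3 * Real.sqrt 3 / 2 with hK
  have hKpos : 0 < K := by positivity
  obtain ⟨C, hC⟩ := scaling (fun i j => Complex.normSq (A i j)) (fun i j => Complex.normSq_nonneg _)
    (normSq_symm hA) σ hσ (fun i => Complex.normSq_pos.2 (hσS i))
  have key : ∀ ε : ℝ, 0 < ε → 9 / 8 * (Fintype.card V : ℝ) ≤ K * cnt hA + ε * (2 * C) := by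
    intro ε hε
    obtain ⟨y, hy⟩ := hC ε hε
    let d : V → ℝ := fun i => Real.exp (y i / 2)
    let B : Matrix V V ℂ := fun i j => d i * A i j * d j
    have hB : B.IsHermitian := by
      ext i j
      rw [conjTranspose_apply]
      simp only [B]
      rw [← hA.apply i j]
      simp
      ring
    have hd0 : ∀ i, d i ≠ 0 := fun i => (Real.exp_pos _).ne'
    have hBA : ∀ i j, B i j ≠ 0 → A i j ≠ 0 := by
      intro i j h h0
      exact h (by simp [B, h0])
    have h1 := cnt_lower hB (fun i => by simp [B, hd]) (fun i j k l hij h1 h2 h3 h4 =>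
      hc i j k l hij (hBA _ _ h1) (hBA _ _ h2) (hBA _ _ h3) (hBA _ _ h4))
    have h2 : cnt hB ≤ cnt hA := cnt_scale hA hB d hd0 (fun _ _ => rfl)
    have hrn : ∀ i, rn B i = ∑ j, Complex.normSq (A i j) * Real.exp (y i + y j) := by
      intro i
      refine Finset.sum_congr rfl fun j _ => ?_
      simp only [B, d, Complex.normSq_mul, Complex.normSq_ofReal, ← Real.exp_add]
      rw [mul_comm (Real.exp _), mul_assoc, ← Real.exp_add]
      congr 2
      ring
    simp only [← hrn] at hy
    have h3 : 3 * ∑ i, rn B i - 2 * ∑ i, rn B i ^ 2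
        = 9 / 8 * (Fintype.card V : ℝ) - 2 * ∑ i, (rn B i - 3 / 4) ^ 2 := by
      have : 9 / 8 * (Fintype.card V : ℝ) = ∑ i : V, (9 / 8 : ℝ) := by simp [mul_comm]
      rw [this, Finset.mul_sum, Finset.mul_sum, Finset.mul_sum, ← Finset.sum_sub_distrib,
        ← Finset.sum_sub_distrib]
      exact Finset.sum_congr rfl fun i _ => by ring
    rw [← hK] at h1
    have h4 : K * (cnt hB : ℝ) ≤ K * cnt hA :=
      mul_le_mul_of_nonneg_left (by exact_mod_cast h2) hKpos.le
    linarith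
  have h9 : 9 / 8 * (Fintype.card V : ℝ) ≤ K * cnt hA := by
    refine le_of_forall_pos_le_add fun δ hδ => ?_
    have hpos : 0 < 2 * |C| + 1 := by positivity
    refine (key (δ / (2 * |C| + 1)) (by positivity)).trans ?_
    gcongr
    rw [div_mul_eq_mul_div, div_le_iff₀ hpos]
    exact mul_le_mul_of_nonneg_left (by linarith [le_abs_self C]) hδ.le
  rw [← beta_K] at h9
  refine le_of_mul_le_mul_left ?_ hKpos
  calc _ = (Real.sqrt 3 - 3 / 2) * K * Fintype.card V := by ring
    _ ≤ _ := h9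

lemma cnt_reduce {A : Matrix V V ℂ} (hA : A.IsHermitian) (T M : Finset V)
    (hTM : Disjoint T M) (hT : ∀ u ∈ T, ∀ v, v ∉ M → A u v = 0) :
    T.card + cnt (hA.submatrix (Subtype.val : {v // v ∉ T ∪ M} → V)) ≤ cnt hA := by
  classical
  set hR := hA.submatrix (Subtype.val : {v // v ∉ T ∪ M} → V)
  obtain ⟨Φ, hΦ, hp⟩ := exists_cnt hR
  let I := {i // 0 ≤ hR.eigenvalues i}
  let E : ((T ⊕ I) → ℂ) →ₗ[ℂ] (V → ℂ) :=
    { toFun := fun z v => if h : v ∈ T then z (Sum.inl ⟨v, h⟩) else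
        if h : v ∉ T ∪ M then
          (Φ ∘ₗ LinearMap.funLeft ℂ ℂ Sum.inr) z ⟨v, h⟩ else 0
      map_add' := by
        intro x y; ext v
        simp only [map_add, Pi.add_apply]
        split_ifs <;> simp
      map_smul' := by
        intro c y; ext v
        simp only [map_smul, Pi.smul_apply, RingHom.id_apply]
        split_ifs <;> simp }
  have hER : ∀ z (v : {v // v ∉ T ∪ M}), E z v = Φ (fun i => z (Sum.inr i)) v := by
    intro z v
    have h1 := v.2
    have h2 : v.1 ∉ T := fun h => h1 (Finset.mem_union_left _ h)
    simp only [E, LinearMap.coe_mk, AddHom.coe_mk, dif_neg h2, dif_pos h1]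
    rfl
  have hEM : ∀ z, ∀ v ∈ M, E z v = 0 := by
    intro z v hv
    have h2 : v ∉ T := fun h => Finset.disjoint_left.1 hTM h hv
    have h1 : ¬ (v ∉ T ∪ M) := fun h => h (Finset.mem_union_right _ hv)
    simp only [E, LinearMap.coe_mk, AddHom.coe_mk, dif_neg h2, dif_neg h1]
  have := card_le_cnt hA E ?_ ?_
  · rw [Fintype.card_sum, Fintype.card_coe] at this
    exact this
  · rw [injective_iff_map_eq_zero]
    intro z hz
    have h1 : (fun i => z (Sum.inr i)) = 0 := by
      apply hΦ
      rw [map_zero]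
      ext v
      rw [← hER z v, hz]; rfl
    ext i
    rcases i with i | i
    · have := congrFun hz i.1
      simpa [E] using this
    · exact congrFun h1 i
  · intro z
    convert hp (fun i => z (Sum.inr i)) using 1
    unfold qf
    congr 1
    simp only [dotProduct, mulVec, Finset.mul_sum, Pi.star_apply, submatrix_apply, ← hER]
    have hz0 : ∀ u v, (u ∈ T ∪ M ∨ v ∈ T ∪ M) → star (E z u) * (A u v * E z v) = 0 := by
      intro u v h
      by_cases hu : u ∈ M
      · simp [hEM z u hu]
      by_cases hv : v ∈ M
      · simp [hEM z v hv]
      rcases h with h | h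
      · have : u ∈ T := (Finset.mem_union.1 h).resolve_right hu
        simp [hT u this v hv]
      · have : v ∈ T := (Finset.mem_union.1 h).resolve_right hv
        have h0 := hT v this u hu
        rw [← hA.apply u v, h0]; simp
    have hsum : ∀ g : V → ℂ, (∀ v ∈ T ∪ M, g v = 0) →
        ∑ v, g v = ∑ v : {v // v ∉ T ∪ M}, g v := by
      intro g hg
      rw [← Finset.sum_subtype (univ.filter (fun v => v ∉ T ∪ M)) (by simp) g, Finset.sum_filter]
      refine Finset.sum_congr rfl fun v _ => ?_
      by_cases h : v ∈ T ∪ M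
      · rw [hg v h]; simp
      · rw [if_pos h]
    rw [hsum _ (fun u hu => Finset.sum_eq_zero fun v _ => hz0 u v (Or.inl hu))]
    refine Finset.sum_congr rfl fun u _ => ?_
    rw [hsum _ (fun v hv => hz0 u v (Or.inr hv))]
end

lemma main_ind (m : ℕ) : ∀ (V : Type) [Fintype V] [DecidableEq V] (A : Matrix V V ℂ)
    (hA : A.IsHermitian), Fintype.card V = m → (∀ i, A i i = 0) → Cod A →
    (Real.sqrt 3 - 3 / 2) * Fintype.card V ≤ cnt hA := by
  induction m using Nat.strong_induction_on with
  | _ m ih =>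
  intro V _ _ A hA hm hd hc
  classical
  let t : V → Finset V := fun i => univ.filter fun j => A i j ≠ 0
  have hsymm : ∀ i j, A i j ≠ 0 → A j i ≠ 0 := by
    intro i j h h0
    exact h (by rw [← hA.apply i j, h0]; simp)
  by_cases hall : ∀ s : Finset V, s.card ≤ (s.biUnion t).card
  · obtain ⟨σ, hσ, h⟩ := (Finset.all_card_le_biUnion_card_iff_exists_injective t).1 hall
    exact hall_case hA hd hc σ hσ (fun i => by simpa [t] using h i)
  · push Not at hall
    obtain ⟨s, hs⟩ := hall
    set N := s.biUnion t with hN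
    have hmemN : ∀ v, v ∈ N ↔ ∃ u ∈ s, A u v ≠ 0 := by intro v; simp [hN, t]
    have hcard : (N \ s).card < (s \ N).card := by
      have h1 := Finset.card_sdiff_add_card_inter N s
      have h2 := Finset.card_sdiff_add_card_inter s N
      rw [Finset.inter_comm] at h2
      omega
    have hdis : Disjoint (s \ N) (N \ s) := by
      rw [Finset.disjoint_left]
      intro v h1 h2
      exact (Finset.mem_sdiff.1 h2).2 (Finset.mem_sdiff.1 h1).1
    have hred := cnt_reduce hA (s \ N) (N \ s) hdis (by
      intro u hu v hv
      by_contra h0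
      rw [Finset.mem_sdiff] at hu hv
      have hvN : v ∈ N := (hmemN v).2 ⟨u, hu.1, h0⟩
      have hvs : v ∈ s := by by_contra h; exact hv ⟨hvN, h⟩
      exact hu.2 ((hmemN u).2 ⟨v, hvs, hsymm _ _ h0⟩))
    set T := s \ N
    set M := N \ s
    have hcR : Fintype.card {v // v ∉ T ∪ M} + (T.card + M.card) = Fintype.card V := by
      rw [← Finset.card_union_of_disjoint hdis, Fintype.card_subtype_compl, Fintype.card_coe]
      exact Nat.sub_add_cancel (Finset.card_le_univ _)
    have hih := ih (Fintype.card {v // v ∉ T ∪ M}) (by omega) {v // v ∉ T ∪ M} _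
      (hA.submatrix (Subtype.val : {v // v ∉ T ∪ M} → V)) rfl (fun i => hd _)
      (fun i j k l hij h1 h2 h3 h4 => Subtype.ext
        (hc i.1 j.1 k.1 l.1 (fun h => hij (Subtype.ext h)) h1 h2 h3 h4))
    have e1 : (Fintype.card V : ℝ) = Fintype.card {v // v ∉ T ∪ M} + (T.card + M.card) := by
      exact_mod_cast hcR.symm
    have e2 : (T.card : ℝ) + cnt (hA.submatrix (Subtype.val : {v // v ∉ T ∪ M} → V)) ≤ cnt hA := by
      exact_mod_cast hred
    have e3 : (M.card : ℝ) ≤ T.card := by exact_mod_cast hcard.le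
    have e4 : (Real.sqrt 3 - 3 / 2) * ((T.card : ℝ) + M.card) ≤ 1 / 2 * ((T.card : ℝ) + M.card) :=
      mul_le_mul_of_nonneg_right beta_half (by positivity)
    rw [e1, mul_add]
    linarith

/-- If `G` is a `C4`-free graph on `n` vertices, then every Hermitian weighted adjacency
matrix of `G` has at least `β n` non-negative eigenvalues, where `β = √3 - 3/2`. -/
theorem inertia_bound_C4_free (n : ℕ) (G : SimpleGraph (Fin n)) (hG : C4Free G)
    (A : Matrix (Fin n) (Fin n) ℂ) (hA : A.IsHermitian)
    (hsupp : ∀ i j, ¬ G.Adj i j → A i j = 0) :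
    (Real.sqrt 3 - 3 / 2) * n ≤ (Fintype.card {i : Fin n // 0 ≤ hA.eigenvalues i} : ℝ) := by
  have hadj : ∀ i j, A i j ≠ 0 → G.Adj i j := fun i j h => by
    by_contra h0; exact h (hsupp i j h0)
  have h := main_ind n (Fin n) A hA (by simp) (fun i => hsupp i i (G.loopless.irrefl i)) (by
    intro i j k l hij h1 h2 h3 h4
    by_contra hkl
    have a1 := hadj _ _ h1
    have a2 := hadj _ _ h2
    have a3 := hadj _ _ h3
    have a4 := hadj _ _ h4
    exact hG i k j l a1.ne hij a3.ne a2.ne hkl a4.ne.symm a1 a2 a4.symm a3.symm)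
  rw [Fintype.card_fin] at h
  convert h using 1
  unfold cnt
  congr!
end
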